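/- (Theorem E, First Matricial Quaternionic Nullstellensatz) For any quaternionic matrix polynomials P₁, …, P_m, Q ∈ M_n(ℍ_c[x₁, …, x_d]) the following are equivalent: (1) for every a ∈ ℝ^d and every vector v ∈ ℍ^n such that P₁(a)v = ⋯ = P_m(a)v = 0, one has Q(a)v = 0; (2) Q belongs to every real left ideal of M_n(ℍ_c[x₁, …, x_d]) that contains P₁, …, P_m. -/

import Mathlib

open MvPolynomial Matrix

/-- Evaluation of a quaternionic polynomial with central (commuting) variables at a real
point, performed componentwise. -/
noncomputable def evalQ {d : ℕ} (a : Fin d → ℝ) (p : Quaternion (MvPolynomial (Fin d) ℝ)) :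
    Quaternion ℝ :=
  ⟨eval a p.re, eval a p.imI, eval a p.imJ, eval a p.imK⟩

/-- Entrywise evaluation of a quaternionic matrix polynomial at a real point. -/
noncomputable def evalMatQ {d n : ℕ} (a : Fin d → ℝ)
    (P : Matrix (Fin n) (Fin n) (Quaternion (MvPolynomial (Fin d) ℝ))) :
    Matrix (Fin n) (Fin n) (Quaternion ℝ) :=
  fun i j => evalQ a (P i j)

/-- A left ideal `I` of the matrix ring over a ring `A` with involution, equipped with the
conjugate-transpose involution `ᴴ`, is *real* if whenever
`(A 0)ᴴ * A 0 + ⋯ + (A (k-1))ᴴ * A (k-1) ∈ I`, each `A i` lies in `I`.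
(In Mathlib, `Ideal` means left ideal.) -/
def Ideal.IsRealLeftIdealH {A : Type*} [Ring A] [StarRing A] {n : ℕ}
    (I : Ideal (Matrix (Fin n) (Fin n) A)) : Prop :=
  ∀ (k : ℕ) (M : Fin k → Matrix (Fin n) (Fin n) A),
    (∑ i, (M i)ᴴ * M i) ∈ I → ∀ i, M i ∈ I

/-!
If `Q` lies outside a real left ideal `I` containing the `P i`, then an `ℝ[x]`-linear functional
that kills `I` but not `Q` exists with values in a domain `ℝ[x] ⧸ p`, where `p` is the annihilator
of a multiple of `Q` modulo `I`. Since `I` is real, `-1` is not a sum of squares in the fraction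
field of `ℝ[x] ⧸ p`, so by Artin–Schreier this field embeds in a real closed field. Tarski's
transfer principle then provides a real zero `a` of `p` at which the value of the functional at `Q`
survives. Evaluation at `a` therefore sends `Q` outside the left ideal generated by the image of
`I`. As `Mₙ(ℍ)` is semisimple, that left ideal is generated by an idempotent `e`, and a column `v`
of `1 - e` satisfies `(P i)(a) v = 0` for all `i` but `Q(a) v ≠ 0`.
-/

open scoped Polynomial

/-- A linearly ordered field whose polynomials satisfy the intermediate value theorem. This is the
form in which real closedness is used here. -/
class PolynomialIVT (F : Type*) [Field F] [LinearOrder F] : Prop where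
  exists_eval_eq_zero : ∀ (p : F[X]) (a b : F), a < b → p.eval a < 0 → 0 < p.eval b →
    ∃ c ∈ Set.Ioo a b, p.eval c = 0

instance : PolynomialIVT ℝ where
  exists_eval_eq_zero p _ _ hab ha hb :=
    intermediate_value_Ioo hab.le p.continuous.continuousOn ⟨ha, hb⟩

namespace PolynomialIVT

theorem mul_neg_of_sign_ne {F : Type*} [Ring F] [LinearOrder F] [IsStrictOrderedRing F] {x y : F}
    (hx : x ≠ 0) (hy : y ≠ 0) (h : SignType.sign x ≠ SignType.sign y) : x * y < 0 := by
  rcases hx.lt_or_gt with hx | hx <;> rcases hy.lt_or_gt with hy | hy <;>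
    simp_all [sign_neg, sign_pos, mul_neg_of_neg_of_pos, mul_neg_of_pos_of_neg]

theorem exists_eq_X_sub_C_pow_succ_mul {F : Type*} [Field F] {p : F[X]} {a : F}
    (hp : p ≠ 0) (ha : p.eval a = 0) :
    ∃ (m : ℕ) (q : F[X]), p = (Polynomial.X - Polynomial.C a) ^ (m + 1) * q ∧ q.eval a ≠ 0 := by
  obtain ⟨q, hpq, hqa⟩ := p.exists_eq_pow_rootMultiplicity_mul_and_not_dvd hp a
  obtain ⟨m, hm⟩ := Nat.exists_eq_succ_of_ne_zero
    ((Polynomial.rootMultiplicity_pos hp).mpr ha).ne'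
  exact ⟨m, q, by rwa [hm] at hpq, by rwa [Polynomial.dvd_iff_isRoot] at hqa⟩

section Calculus

variable {F : Type*} [Field F] [LinearOrder F] [IsStrictOrderedRing F] [PolynomialIVT F]
  {p : F[X]} {a b x : F}

theorem exists_eval_eq_zero_of_mul_neg (hab : a < b) (h : p.eval a * p.eval b < 0) :
    ∃ c ∈ Set.Ioo a b, p.eval c = 0 := by
  rcases mul_neg_iff.mp h with ⟨ha, hb⟩ | ⟨ha, hb⟩
  · simpa using exists_eval_eq_zero (-p) a b hab (by simpa using ha) (by simpa using hb)
  · exact exists_eval_eq_zero p a b hab ha hb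

theorem exists_eval_eq_zero_of_sign_ne (hab : a ≤ b)
    (h : SignType.sign (p.eval a) ≠ SignType.sign (p.eval b)) :
    ∃ c ∈ Set.Icc a b, p.eval c = 0 := by
  by_contra! hne
  obtain ⟨c, hc, hpc⟩ := exists_eval_eq_zero_of_mul_neg (hab.lt_of_ne (by rintro rfl; exact h rfl))
    (mul_neg_of_sign_ne (hne a (Set.left_mem_Icc.mpr hab)) (hne b (Set.right_mem_Icc.mpr hab)) h)
  exact hne c (Set.Ioo_subset_Icc_self hc) hpc

/- With `p = (X - a)ᵐ⁺¹ (X - b)ⁿ⁺¹ r`, the derivative of `p` is `(X - a)ᵐ (X - b)ⁿ s`, where `s`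
changes sign between `a` and `b`. -/
theorem exists_derivative_eval_eq_zero_of_consecutive (hab : a < b) (ha : p.eval a = 0)
    (hb : p.eval b = 0) (hne : ∀ c ∈ Set.Ioo a b, p.eval c ≠ 0) :
    ∃ c ∈ Set.Ioo a b, p.derivative.eval c = 0 := by
  have hp : p ≠ 0 := by
    rintro rfl
    obtain ⟨c, hc⟩ := exists_between hab
    exact hne c hc Polynomial.eval_zero
  obtain ⟨m, q, rfl, hqa⟩ := exists_eq_X_sub_C_pow_succ_mul hp ha
  have hqb : q.eval b = 0 := by simpa [(sub_pos.mpr hab).ne'] using hb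
  obtain ⟨n, r, rfl, hrb⟩ := exists_eq_X_sub_C_pow_succ_mul (right_ne_zero_of_mul hp) hqb
  set s : F[X] := Polynomial.C (m + 1 : F) * (Polynomial.X - Polynomial.C b) * r +
    Polynomial.C (n + 1 : F) * (Polynomial.X - Polynomial.C a) * r +
    (Polynomial.X - Polynomial.C a) * (Polynomial.X - Polynomial.C b) * r.derivative with hs
  have hra : r.eval a ≠ 0 := right_ne_zero_of_mul (by simpa using hqa)
  have hrab : 0 < r.eval a * r.eval b := by
    refine lt_of_not_ge fun h => ?_
    obtain ⟨c, hc, hrc⟩ := exists_eval_eq_zero_of_mul_neg hab (h.lt_of_ne (mul_ne_zero hra hrb))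
    exact hne c hc (by simp [hrc])
  have hsab : s.eval a * s.eval b < 0 := by
    have heq : s.eval a * s.eval b =
        -((m + 1) * (n + 1) * (b - a) ^ 2 * (r.eval a * r.eval b)) := by
      simp [hs]; ring
    have := sub_pos.mpr hab
    rw [heq, neg_lt_zero]
    positivity
  obtain ⟨c, hc, hsc⟩ := exists_eval_eq_zero_of_mul_neg hab hsab
  refine ⟨c, hc, ?_⟩
  have hderiv : Polynomial.derivative ((Polynomial.X - Polynomial.C a) ^ (m + 1) *
      ((Polynomial.X - Polynomial.C b) ^ (n + 1) * r)) =
      (Polynomial.X - Polynomial.C a) ^ m * (Polynomial.X - Polynomial.C b) ^ n * s := by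
    simp only [hs, Polynomial.derivative_mul, Polynomial.derivative_pow, map_add, map_one,
      Polynomial.derivative_sub, Polynomial.derivative_X, Polynomial.derivative_C, map_natCast,
      Nat.cast_add, Nat.cast_one, Nat.add_sub_cancel]
    ring
  rw [hderiv, Polynomial.eval_mul, hsc, mul_zero]

theorem exists_derivative_eval_eq_zero (hab : a < b) (ha : p.eval a = 0) (hb : p.eval b = 0) :
    ∃ c ∈ Set.Ioo a b, p.derivative.eval c = 0 := by
  classical
  rcases eq_or_ne p 0 with rfl | hp
  · simpa using exists_between hab
  obtain ⟨b', hb', hmin⟩ := (p.roots.toFinset.filter (a < ·)).exists_min_image id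
    ⟨b, by simp [hp, hb, hab]⟩
  simp only [Finset.mem_filter, Multiset.mem_toFinset, Polynomial.mem_roots hp,
    Polynomial.IsRoot, id_eq, and_imp] at hb' hmin
  obtain ⟨c, hc, hpc⟩ := exists_derivative_eval_eq_zero_of_consecutive hb'.2 ha hb'.1
    fun c hc h => (hmin c h hc.1).not_gt hc.2
  exact ⟨c, ⟨hc.1, hc.2.trans_le (hmin b hb hab)⟩, hpc⟩

theorem exists_eval_sub_eval_eq_mul (hab : a < b) (p : F[X]) :
    ∃ c ∈ Set.Ioo a b, p.eval b - p.eval a = p.derivative.eval c * (b - a) := by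
  obtain ⟨c, hc, h⟩ := exists_derivative_eval_eq_zero (p := Polynomial.C (b - a) *
    (p - Polynomial.C (p.eval a)) - Polynomial.C (p.eval b - p.eval a) *
    (Polynomial.X - Polynomial.C a)) hab (by simp) (by simp; ring)
  refine ⟨c, hc, ?_⟩
  simp only [Polynomial.derivative_sub, Polynomial.derivative_mul, Polynomial.derivative_C,
    Polynomial.derivative_X, Polynomial.eval_sub, Polynomial.eval_mul, Polynomial.eval_add,
    Polynomial.eval_C, Polynomial.eval_one, Polynomial.eval_zero] at h
  linear_combination -h

theorem exists_sign_eval_sub_eval_eq (hab : a < b) (p : F[X]) :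
    ∃ c ∈ Set.Ioo a b,
      SignType.sign (p.eval b - p.eval a) = SignType.sign (p.derivative.eval c) := by
  obtain ⟨c, hc, h⟩ := exists_eval_sub_eval_eq_mul hab p
  exact ⟨c, hc, by rw [h, sign_mul, sign_pos (sub_pos.mpr hab), mul_one]⟩

theorem monotoneOn_or_antitoneOn_of_sign_derivative_eq {s : SignType}
    (h : ∀ c ∈ Set.Ioo a b, SignType.sign (p.derivative.eval c) = s) :
    MonotoneOn (p.eval ·) (Set.Icc a b) ∨ AntitoneOn (p.eval ·) (Set.Icc a b) := by
  have hsub : ∀ x ∈ Set.Icc a b, ∀ y ∈ Set.Icc a b, x < y →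
      SignType.sign (p.eval y - p.eval x) = s := fun x hx y hy hxy => by
    obtain ⟨c, hc, hsign⟩ := exists_sign_eval_sub_eval_eq hxy p
    rw [hsign, h c ⟨hx.1.trans_lt hc.1, hc.2.trans_le hy.2⟩]
  rcases le_total 0 s with hs | hs
  · refine .inl fun x hx y hy hxy => ?_
    rcases hxy.eq_or_lt with rfl | hxy
    · rfl
    · rw [← hsub x hx y hy hxy, sign_nonneg_iff] at hs
      exact sub_nonneg.mp hs
  · refine .inr fun x hx y hy hxy => ?_
    rcases hxy.eq_or_lt with rfl | hxy
    · rfl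
    · rw [← hsub x hx y hy hxy, sign_nonpos_iff] at hs
      exact sub_nonpos.mp hs

theorem sign_eval_eq_left_or_right (hx : x ∈ Set.Ioo a b) (hpx : p.eval x ≠ 0)
    (h : p.derivative = 0 ∨ ∀ c ∈ Set.Ioo a b, p.derivative.eval c ≠ 0) :
    SignType.sign (p.eval x) = SignType.sign (p.eval a) ∨
      SignType.sign (p.eval x) = SignType.sign (p.eval b) := by
  by_contra! hne
  rcases h with h | h
  · rw [Polynomial.eq_C_of_derivative_eq_zero h] at hne
    simp at hne
  · obtain ⟨u, hu, hpu⟩ := exists_eval_eq_zero_of_sign_ne hx.1.le hne.1.symm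
    obtain ⟨v, hv, hpv⟩ := exists_eval_eq_zero_of_sign_ne hx.2.le hne.2
    have hux : u < x := hu.2.lt_of_ne (by rintro rfl; exact hpx hpu)
    have hxv : x < v := hv.1.lt_of_ne (by rintro rfl; exact hpx hpv)
    obtain ⟨c, hc, hpc⟩ := exists_derivative_eval_eq_zero (hux.trans hxv) hpu hpv
    exact h c ⟨hu.1.trans_lt hc.1, hc.2.trans_le hv.2⟩ hpc

theorem eval_mul_eval_neg_of_eval_eq_zero (hx : x ∈ Set.Ioo a b) (hpx : p.eval x = 0)
    (h : ∀ c ∈ Set.Ioo a b, p.derivative.eval c ≠ 0) : p.eval a * p.eval b < 0 := by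
  obtain ⟨u, hu, hsu⟩ := exists_sign_eval_sub_eval_eq hx.1 p
  obtain ⟨v, hv, hsv⟩ := exists_sign_eval_sub_eval_eq hx.2 p
  have hsign : SignType.sign (p.derivative.eval u) = SignType.sign (p.derivative.eval v) := by
    by_contra hne
    obtain ⟨c, hc, hpc⟩ := exists_eval_eq_zero_of_sign_ne (hu.2.trans hv.1).le hne
    exact h c ⟨hu.1.trans_le hc.1, hc.2.trans_lt hv.2⟩ hpc
  rw [hpx, zero_sub, Left.sign_neg] at hsu
  rw [hpx, sub_zero, ← hsign, ← hsu] at hsv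
  have hne : SignType.sign (p.eval a) ≠ 0 := fun h0 =>
    h u ⟨hu.1, hu.2.trans hx.2⟩ (by rw [← sign_eq_zero_iff, ← hsu, h0, neg_zero])
  rw [← sign_eq_neg_one_iff, sign_mul, hsv]
  generalize SignType.sign (p.eval a) = s at hne
  decide +revert

theorem exists_sign_eval_eq_right (hab : a < b) (hb : p.eval b ≠ 0) :
    ∃ y ∈ Set.Ioo a b, SignType.sign (p.eval y) = SignType.sign (p.eval b) := by
  classical
  have hp : p ≠ 0 := by rintro rfl; simp at hb
  obtain ⟨u, hu, hmax⟩ := (insert a (p.roots.toFinset.filter (· < b))).exists_max_image id (by simp)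
  have hub : u < b := by
    rcases Finset.mem_insert.mp hu with rfl | hu
    exacts [hab, (Finset.mem_filter.mp hu).2]
  have hau : a ≤ u := hmax a (Finset.mem_insert_self _ _)
  obtain ⟨y, huy, hyb⟩ := exists_between hub
  refine ⟨y, ⟨hau.trans_lt huy, hyb⟩, ?_⟩
  by_contra hne
  obtain ⟨c, hc, hpc⟩ := exists_eval_eq_zero_of_sign_ne hyb.le hne
  have hcb : c < b := hc.2.lt_of_ne (by rintro rfl; exact hb hpc)
  exact (huy.trans_le hc.1).not_ge (hmax c (by simp [hp, hpc, hcb]))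

theorem exists_sign_eval_eq_left (hab : a < b) (ha : p.eval a ≠ 0) :
    ∃ y ∈ Set.Ioo a b, SignType.sign (p.eval y) = SignType.sign (p.eval a) := by
  obtain ⟨y, hy, hsign⟩ := exists_sign_eval_eq_right (p := p.comp (-Polynomial.X))
    (neg_lt_neg hab) (by simpa using ha)
  exact ⟨-y, ⟨lt_neg.mp hy.2, neg_lt.mp hy.1⟩, by simpa using hsign⟩

end Calculus

end PolynomialIVT

/-- Two ring homomorphisms into ordered fields give the same signs to all elements of `S`. For
homomorphisms out of a polynomial ring this compares the sign conditions met by two points. -/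
def SameSigns {R F G : Type*} [CommRing R] [Field F] [LinearOrder F] [Field G] [LinearOrder G]
    (φ : R →+* F) (ψ : R →+* G) (S : Finset R) : Prop :=
  ∀ p ∈ S, SignType.sign (φ p) = SignType.sign (ψ p)

namespace SameSigns

section

variable {R F G : Type*} [CommRing R] [Field F] [LinearOrder F] [Field G] [LinearOrder G]
  {φ : R →+* F} {ψ : R →+* G} {S T : Finset R} {p : R[X]}

theorem mono (h : SameSigns φ ψ T) (hST : S ⊆ T) : SameSigns φ ψ S := fun p hp => h p (hST hp)

theorem symm (h : SameSigns φ ψ S) : SameSigns ψ φ S := fun p hp => (h p hp).symm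

theorem trans {H : Type*} [Field H] [LinearOrder H] {χ : R →+* H} (h : SameSigns φ ψ S)
    (h' : SameSigns ψ χ S) : SameSigns φ χ S := fun p hp => (h p hp).trans (h' p hp)

theorem eq_zero_iff (h : SameSigns φ ψ S) {p : R} (hp : p ∈ S) : φ p = 0 ↔ ψ p = 0 := by
  rw [← sign_eq_zero_iff, h p hp, sign_eq_zero_iff]

theorem support_map_eq (h : SameSigns φ ψ p.coeffs) :
    (p.map φ).support = (p.map ψ).support := by
  ext n
  by_cases hn : p.coeff n = 0
  · simp [hn]
  · simpa using not_congr (h.eq_zero_iff (Polynomial.coeff_mem_coeffs hn))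

theorem map_eq_zero_iff (h : SameSigns φ ψ p.coeffs) :
    p.map φ = 0 ↔ p.map ψ = 0 := by
  rw [← Polynomial.support_eq_empty, h.support_map_eq, Polynomial.support_eq_empty]

theorem natDegree_map_eq (h : SameSigns φ ψ p.coeffs) :
    (p.map φ).natDegree = (p.map ψ).natDegree := by
  rw [Polynomial.natDegree, Polynomial.degree, h.support_map_eq, Polynomial.natDegree,
    Polynomial.degree]

theorem sign_leadingCoeff_map (h : SameSigns φ ψ p.coeffs) :
    SignType.sign (p.map φ).leadingCoeff = SignType.sign (p.map ψ).leadingCoeff := by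
  rw [Polynomial.leadingCoeff, Polynomial.leadingCoeff, h.natDegree_map_eq, Polynomial.coeff_map,
    Polynomial.coeff_map]
  by_cases hn : p.coeff (p.map ψ).natDegree = 0
  · simp [hn]
  · exact h _ (Polynomial.coeff_mem_coeffs hn)

end

end SameSigns

section Thom

variable {R : Type*} [CommRing R] {S : Finset R[X]}

section OneField

variable {F : Type*} [Field F] [LinearOrder F] [IsStrictOrderedRing F] [PolynomialIVT F]
  {i : R →+* F} {x x' : F}

/- Thom's lemma. The derivative of `p` has constant sign on the interval by induction, so `p` is
monotone or antitone there. -/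
theorem SameSigns.of_mem_Icc (hS : ∀ p ∈ S, p.derivative ∈ S)
    (h : SameSigns (Polynomial.eval₂RingHom i x) (Polynomial.eval₂RingHom i x') S) {z : F}
    (hz : z ∈ Set.Icc x x') :
    SameSigns (Polynomial.eval₂RingHom i z) (Polynomial.eval₂RingHom i x) S := by
  intro p hp
  induction hn : p.natDegree using Nat.strong_induction_on generalizing p z with
  | _ n ih =>
  rcases Nat.eq_zero_or_pos n with rfl | hpos
  · rw [Polynomial.eq_C_of_natDegree_eq_zero hn]
    simp
  have hderiv : ∀ c ∈ Set.Ioo x x', SignType.sign ((p.map i).derivative.eval c) =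
      SignType.sign ((p.map i).derivative.eval x) := fun c hc => by
    simpa [Polynomial.derivative_map, Polynomial.eval_map] using
      ih _ (hn ▸ Polynomial.natDegree_derivative_lt (hn ▸ hpos.ne')) (Set.Ioo_subset_Icc_self hc)
        _ (hS p hp) rfl
  have hpx := h p hp
  simp only [Polynomial.coe_eval₂RingHom, ← Polynomial.eval_map] at hpx ⊢
  have hxx' : x ≤ x' := hz.1.trans hz.2
  rcases PolynomialIVT.monotoneOn_or_antitoneOn_of_sign_derivative_eq hderiv with hm | hm
  · exact le_antisymm
      ((SignType.sign.monotone (hm hz (Set.right_mem_Icc.mpr hxx') hz.2)).trans_eq hpx.symm)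
      (SignType.sign.monotone (hm (Set.left_mem_Icc.mpr hxx') hz hz.1))
  · exact le_antisymm (SignType.sign.monotone (hm (Set.left_mem_Icc.mpr hxx') hz hz.1))
      (hpx.trans_le (SignType.sign.monotone (hm hz (Set.right_mem_Icc.mpr hxx') hz.2)))

theorem SameSigns.sign_eval_sub_eval (hS : ∀ p ∈ S, p.derivative ∈ S)
    (h : SameSigns (Polynomial.eval₂RingHom i x) (Polynomial.eval₂RingHom i x') S)
    (hxx' : x < x') {p : R[X]} (hp : p.derivative ∈ S) :
    SignType.sign (p.eval₂ i x' - p.eval₂ i x) = SignType.sign (p.derivative.eval₂ i x) := by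
  obtain ⟨c, hc, hsign⟩ := PolynomialIVT.exists_sign_eval_sub_eval_eq hxx' (p.map i)
  simp only [Polynomial.derivative_map, Polynomial.eval_map] at hsign
  rw [hsign]
  exact h.of_mem_Icc hS (Set.Ioo_subset_Icc_self hc) _ hp

end OneField

variable {F G : Type*} [Field F] [LinearOrder F] [IsStrictOrderedRing F] [PolynomialIVT F]
  [Field G] [LinearOrder G] [IsStrictOrderedRing G] [PolynomialIVT G]
  {i : R →+* F} {j : R →+* G} {x x' : F} {y y' : G}

/- The sign of `p'` is common to all four points and decides on which side of `x` the point `x'`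
lies. -/
theorem SameSigns.lt_of_lt_of_derivative_mem (hS : ∀ p ∈ S, p.derivative ∈ S)
    (hxy : SameSigns (Polynomial.eval₂RingHom i x) (Polynomial.eval₂RingHom j y) S)
    (hxy' : SameSigns (Polynomial.eval₂RingHom i x') (Polynomial.eval₂RingHom j y') S)
    (hxx' : SameSigns (Polynomial.eval₂RingHom i x) (Polynomial.eval₂RingHom i x') S)
    {p : R[X]} (hp' : p.derivative ∈ S)
    (hp : SignType.sign (p.eval₂ i x) = SignType.sign (p.eval₂ j y))
    (hpx' : SignType.sign (p.eval₂ i x') = SignType.sign (p.eval₂ j y'))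
    (hne : SignType.sign (p.eval₂ i x) ≠ SignType.sign (p.eval₂ i x'))
    (hlt : x < x') : y < y' := by
  by_contra! hle
  rcases hle.eq_or_lt with rfl | hlt'
  · exact hne (hp.trans hpx'.symm)
  have hpx := hxx'.sign_eval_sub_eval hS hlt hp'
  have hpy := ((hxy.symm.trans hxx').trans hxy').symm.sign_eval_sub_eval hS hlt' hp'
  have hdx : SignType.sign (p.derivative.eval₂ i x) = SignType.sign (p.derivative.eval₂ j y') :=
    (hxx'.trans hxy') _ hp'
  rw [← hdx, ← hpx] at hpy
  rcases lt_trichotomy (p.eval₂ i x) (p.eval₂ i x') with hlt'' | heq | hgt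
  · rw [sign_pos (sub_pos.mpr hlt''), sign_eq_one_iff, sub_pos] at hpy
    refine hne (le_antisymm (SignType.sign.monotone hlt''.le) ?_)
    rw [hp, hpx']
    exact SignType.sign.monotone hpy.le
  · exact hne (congrArg _ heq)
  · rw [sign_neg (sub_neg.mpr hgt), sign_eq_neg_one_iff, sub_neg] at hpy
    refine hne (le_antisymm ?_ (SignType.sign.monotone hgt.le))
    rw [hp, hpx']
    exact SignType.sign.monotone hpy.le

/- A member of `S` of least degree separating `x` from `x'` has a derivative that does not separate
them. -/
theorem SameSigns.lt_of_lt (hS : ∀ p ∈ S, p.derivative ∈ S)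
    (h : SameSigns (Polynomial.eval₂RingHom i x) (Polynomial.eval₂RingHom j y) S)
    (h' : SameSigns (Polynomial.eval₂RingHom i x') (Polynomial.eval₂RingHom j y') S)
    (hne : ∃ p ∈ S, SignType.sign (p.eval₂ i x) ≠ SignType.sign (p.eval₂ i x'))
    (hlt : x < x') : y < y' := by
  classical
  obtain ⟨p, hp, hmin⟩ := (S.filter fun p => SignType.sign (p.eval₂ i x) ≠
    SignType.sign (p.eval₂ i x')).exists_min_image Polynomial.natDegree
    (by simpa [Finset.Nonempty] using hne)
  simp only [Finset.mem_filter] at hp hmin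
  set S' := S.filter (·.natDegree < p.natDegree)
  have hS'S : S' ⊆ S := Finset.filter_subset _ _
  have hpdeg : p.natDegree ≠ 0 := fun h0 => hp.2 <| by
    rw [Polynomial.eq_C_of_natDegree_eq_zero h0]
    simp
  have hp' : p.derivative ∈ S' :=
    Finset.mem_filter.mpr ⟨hS p hp.1, Polynomial.natDegree_derivative_lt hpdeg⟩
  have hS' : ∀ q ∈ S', q.derivative ∈ S' := fun q hq => by
    simp only [S', Finset.mem_filter] at hq ⊢
    exact ⟨hS q hq.1, (Polynomial.natDegree_derivative_le q).trans_lt (by omega)⟩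
  have hxx' : SameSigns (Polynomial.eval₂RingHom i x) (Polynomial.eval₂RingHom i x') S' := by
    intro q hq
    by_contra hqne
    exact (hmin q ⟨hS'S hq, hqne⟩).not_gt (Finset.mem_filter.mp hq).2
  exact (h.mono hS'S).lt_of_lt_of_derivative_mem hS' (h'.mono hS'S) hxx' hp' (h p hp.1)
    (h' p hp.1) hp.2 hlt

end Thom

section Infinity

variable {F : Type*} [Field F] [LinearOrder F] [IsStrictOrderedRing F]

theorem tendsto_eval_atTop_of_leadingCoeff_pos {p : F[X]} (hdeg : 0 < p.degree)
    (hlc : 0 < p.leadingCoeff) :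
    Filter.Tendsto (p.eval ·) Filter.atTop Filter.atTop := by
  revert hlc
  refine Polynomial.degree_pos_induction_on (P := fun p => 0 < p.leadingCoeff →
    Filter.Tendsto (p.eval ·) Filter.atTop Filter.atTop) p hdeg ?_ ?_ ?_
  · intro a _ hlc
    rw [Polynomial.leadingCoeff_C_mul_X] at hlc
    simpa using Filter.tendsto_id.const_mul_atTop hlc
  · intro q _ ih hlc
    rw [Polynomial.leadingCoeff_mul_X] at hlc
    simpa using (ih hlc).atTop_mul_atTop₀ Filter.tendsto_id
  · intro q a hq ih hlc
    rw [Polynomial.leadingCoeff_add_of_degree_lt' (Polynomial.degree_C_le.trans_lt hq)] at hlc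
    simpa using Filter.tendsto_atTop_add_const_right _ a (ih hlc)

theorem eventually_sign_eval_atTop (p : F[X]) :
    ∀ᶠ x in Filter.atTop, SignType.sign (p.eval x) = SignType.sign p.leadingCoeff := by
  rcases le_or_gt p.degree 0 with hdeg | hdeg
  · rw [Polynomial.eq_C_of_degree_le_zero hdeg]
    simp
  rcases lt_trichotomy p.leadingCoeff 0 with hlc | hlc | hlc
  · have h := tendsto_eval_atTop_of_leadingCoeff_pos (p := -p) (by rwa [Polynomial.degree_neg])
      (by simpa using hlc)
    filter_upwards [h.eventually_gt_atTop 0] with x hx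
    rw [sign_neg hlc, sign_neg (by simpa using hx)]
  · simp [Polynomial.leadingCoeff_eq_zero.mp hlc]
  · filter_upwards [(tendsto_eval_atTop_of_leadingCoeff_pos hdeg hlc).eventually_gt_atTop 0]
      with x hx
    rw [sign_pos hlc, sign_pos hx]

theorem eventually_sign_eval_atBot (p : F[X]) :
    ∀ᶠ x in Filter.atBot, SignType.sign (p.eval x) =
      SignType.sign (p.leadingCoeff * (-1) ^ p.natDegree) := by
  filter_upwards [Filter.tendsto_neg_atBot_atTop.eventually
    (eventually_sign_eval_atTop (p.comp (-Polynomial.X)))] with x hx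
  rw [Polynomial.leadingCoeff_comp (by simp)] at hx
  simpa using hx

variable {R G : Type*} [CommRing R] [Field G] [LinearOrder G] [IsStrictOrderedRing G]
  {i : R →+* F} {j : R →+* G}

variable {S : Finset R[X]}

theorem SameSigns.exists_gt (h : ∀ p ∈ S, SameSigns i j p.coeffs) (a : F) (b : G) :
    ∃ a' > a, ∃ b' > b,
      SameSigns (Polynomial.eval₂RingHom i a') (Polynomial.eval₂RingHom j b') S := by
  obtain ⟨a', ha', haa'⟩ := (((Finset.eventually_all S).mpr fun p _ =>
    eventually_sign_eval_atTop (p.map i)).and (Filter.eventually_gt_atTop a)).exists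
  obtain ⟨b', hb', hbb'⟩ := (((Finset.eventually_all S).mpr fun p _ =>
    eventually_sign_eval_atTop (p.map j)).and (Filter.eventually_gt_atTop b)).exists
  refine ⟨a', haa', b', hbb', fun p hp => ?_⟩
  rw [Polynomial.coe_eval₂RingHom, Polynomial.coe_eval₂RingHom, ← Polynomial.eval_map,
    ← Polynomial.eval_map, ha' p hp, hb' p hp, (h p hp).sign_leadingCoeff_map]

theorem SameSigns.exists_lt (h : ∀ p ∈ S, SameSigns i j p.coeffs) (a : F) (b : G) :
    ∃ a' < a, ∃ b' < b,
      SameSigns (Polynomial.eval₂RingHom i a') (Polynomial.eval₂RingHom j b') S := by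
  obtain ⟨a', ha', haa'⟩ := (((Finset.eventually_all S).mpr fun p _ =>
    eventually_sign_eval_atBot (p.map i)).and (Filter.eventually_lt_atBot a)).exists
  obtain ⟨b', hb', hbb'⟩ := (((Finset.eventually_all S).mpr fun p _ =>
    eventually_sign_eval_atBot (p.map j)).and (Filter.eventually_lt_atBot b)).exists
  refine ⟨a', haa', b', hbb', fun p hp => ?_⟩
  rw [Polynomial.coe_eval₂RingHom, Polynomial.coe_eval₂RingHom, ← Polynomial.eval_map,
    ← Polynomial.eval_map, ha' p hp, hb' p hp, sign_mul, sign_mul,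
    (h p hp).sign_leadingCoeff_map, (h p hp).natDegree_map_eq]
  rcases Nat.even_or_odd (p.map j).natDegree with hn | hn <;> simp [hn.neg_one_pow]

end Infinity

section Cells

theorem degree_lt_of_degree_lt_succ {R : Type*} [Semiring R] {D : ℕ} {g : R[X] → R[X]}
    (hg0 : g 0 = 0) (hg : ∀ p, p ≠ 0 → (g p).degree < p.degree) {p : R[X]}
    (hp : p.degree < (D + 1 : ℕ)) : (g p).degree < D := by
  rcases eq_or_ne p 0 with rfl | hp0
  · simp [hg0]
  · exact (hg p hp0).trans_le (le_of_not_gt fun h =>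
      hp.not_ge (by simpa using Nat.WithBot.add_one_le_of_lt h))

theorem degree_derivative_lt_of_degree_lt_succ {R : Type*} [Semiring R] {D : ℕ} {p : R[X]}
    (hp : p.degree < (D + 1 : ℕ)) : p.derivative.degree < D :=
  degree_lt_of_degree_lt_succ (g := (Polynomial.derivative ·)) Polynomial.derivative_zero
    (fun _ => Polynomial.degree_derivative_lt) hp

theorem degree_eraseLead_lt_of_degree_lt_succ {R : Type*} [Semiring R] {D : ℕ} {p : R[X]}
    (hp : p.degree < (D + 1 : ℕ)) : p.eraseLead.degree < D :=
  degree_lt_of_degree_lt_succ Polynomial.eraseLead_zero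
    (fun _ => Polynomial.degree_eraseLead_lt) hp

theorem exists_finset_derivative_eraseLead_mem {R : Type*} [Semiring R] (D : ℕ)
    (S : Finset R[X]) (hS : ∀ p ∈ S, p.degree < D) :
    ∃ T : Finset R[X], S ⊆ T ∧ (∀ p ∈ T, p.degree < D) ∧ (∀ p ∈ T, p.derivative ∈ T) ∧
      ∀ p ∈ T, p.eraseLead ∈ T := by
  classical
  induction D generalizing S with
  | zero =>
    refine ⟨S, subset_rfl, hS, fun p hp => ?_, fun p hp => ?_⟩ <;>
    · obtain rfl : p = 0 := Polynomial.degree_eq_bot.mp (Nat.WithBot.lt_zero_iff.mp (hS p hp))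
      simpa using hp
  | succ D ih =>
    obtain ⟨T, hST, hT, hder, hlead⟩ := ih (S.image Polynomial.derivative ∪
        S.image Polynomial.eraseLead) fun p hp => by
      rcases Finset.mem_union.mp hp with hp | hp <;> obtain ⟨q, hq, rfl⟩ := Finset.mem_image.mp hp
      · exact degree_derivative_lt_of_degree_lt_succ (hS q hq)
      · exact degree_eraseLead_lt_of_degree_lt_succ (hS q hq)
    refine ⟨S ∪ T, Finset.subset_union_left, fun p hp => ?_, fun p hp => ?_, fun p hp => ?_⟩
    · rcases Finset.mem_union.mp hp with hp | hp
      exacts [hS p hp, (hT p hp).trans (by exact_mod_cast D.lt_succ_self)]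
    all_goals
      rcases Finset.mem_union.mp hp with hp | hp
    · exact Finset.mem_union_right _ (hST (Finset.mem_union_left _ (Finset.mem_image_of_mem _ hp)))
    · exact Finset.mem_union_right _ (hder p hp)
    · exact Finset.mem_union_right _ (hST (Finset.mem_union_right _ (Finset.mem_image_of_mem _ hp)))
    · exact Finset.mem_union_right _ (hlead p hp)

theorem exists_pseudo_remainder {R : Type*} [CommRing R] (f : R[X]) {q : R[X]} (hq : q ≠ 0) :
    ∃ (n : ℕ) (g r : R[X]),
      Polynomial.C (q.leadingCoeff ^ (2 * n)) * f = q * g + r ∧ r.degree < q.degree := by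
  obtain ⟨N, hN⟩ : ∃ N : ℕ, f.degree < ((q.natDegree + N : ℕ) : WithBot ℕ) :=
    ⟨f.natDegree + 1, Polynomial.degree_le_natDegree.trans_lt (by norm_cast; omega)⟩
  induction N generalizing f with
  | zero => exact ⟨0, 0, f, by simp, by rwa [Polynomial.degree_eq_natDegree hq]⟩
  | succ N ih =>
    have hdeg : (Polynomial.C (q.leadingCoeff ^ 2) * f - Polynomial.X ^ N *
        (Polynomial.C (q.leadingCoeff * f.coeff (q.natDegree + N)) * q)).degree <
        ((q.natDegree + N : ℕ) : WithBot ℕ) := by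
      rw [Polynomial.degree_lt_iff_coeff_zero] at hN ⊢
      intro m hm
      rw [Polynomial.coeff_sub, Polynomial.coeff_C_mul, Polynomial.coeff_X_pow_mul',
        if_pos (by omega), Polynomial.coeff_C_mul]
      rcases hm.eq_or_lt with rfl | hm
      · rw [Nat.add_sub_cancel, Polynomial.leadingCoeff]
        ring
      · rw [hN m (by omega), Polynomial.coeff_eq_zero_of_natDegree_lt (n := m - N) (by omega)]
        ring
    obtain ⟨n, g, r, hfr, hr⟩ := ih _ hdeg
    refine ⟨n + 1, g + Polynomial.C (q.leadingCoeff ^ (2 * n)) * Polynomial.X ^ N *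
      Polynomial.C (q.leadingCoeff * f.coeff (q.natDegree + N)), r, ?_, hr⟩
    rw [mul_add 2 n 1, pow_add, Polynomial.C_mul]
    linear_combination hfr

/- `E` stands for having the same signs, `A` and `B` for being a root: an adjacent root on one side
corresponds to an adjacent root on the other. -/
theorem exists_gt_and_exists_gt_of_correspondence {α β : Type*} [LinearOrder α] [LinearOrder β]
    {E J : α → β → Prop} {A : α → Prop} {B : β → Prop} (hA : {a | A a}.Finite)
    (hEA : ∀ a, A a → ∃ b, E a b) (hEB : ∀ b, B b → ∃ a, A a ∧ E a b)
    (hlt : ∀ a b a' b', E a b → E a' b' → A a ∨ A a' → (a < a' ↔ b < b'))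
    (hJ : ∀ a b, A a → E a b → J a b) (hinf : ∀ a b, ∃ a' > a, ∃ b' > b, J a' b')
    {x : α} {y : β} (hxy : E x y) :
    ∃ a > x, ∃ b > y, J a b ∧ (∀ c, x < c → c < a → ¬ A c) ∧ ∀ c, y < c → c < b → ¬ B c := by
  by_cases hne : {a | A a ∧ x < a}.Nonempty
  · obtain ⟨a, ⟨hAa, hxa⟩, hmin⟩ :=
      Set.exists_min_image _ id (hA.subset fun a ha => ha.1) hne
    obtain ⟨b, hab⟩ := hEA a hAa
    refine ⟨a, hxa, b, (hlt x y a b hxy hab (.inr hAa)).mp hxa, hJ a b hAa hab,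
      fun c hxc hca hAc => (hmin c ⟨hAc, hxc⟩).not_gt hca, fun c hyc hcb hBc => ?_⟩
    obtain ⟨a', hAa', ha'c⟩ := hEB c hBc
    exact (hmin a' ⟨hAa', (hlt x y a' c hxy ha'c (.inr hAa')).mpr hyc⟩).not_gt
      ((hlt a' c a b ha'c hab (.inl hAa')).mpr hcb)
  · obtain ⟨a, hxa, b, hyb, hab⟩ := hinf x y
    refine ⟨a, hxa, b, hyb, hab, fun c hxc _ hAc => hne ⟨c, hAc, hxc⟩, fun c hyc _ hBc => ?_⟩
    obtain ⟨a', hAa', ha'c⟩ := hEB c hBc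
    exact hne ⟨a', hAa', (hlt x y a' c hxy ha'c (.inr hAa')).mpr hyc⟩

theorem exists_lt_and_exists_lt_of_correspondence {α β : Type*} [LinearOrder α] [LinearOrder β]
    {E J : α → β → Prop} {A : α → Prop} {B : β → Prop} (hA : {a | A a}.Finite)
    (hEA : ∀ a, A a → ∃ b, E a b) (hEB : ∀ b, B b → ∃ a, A a ∧ E a b)
    (hlt : ∀ a b a' b', E a b → E a' b' → A a ∨ A a' → (a < a' ↔ b < b'))
    (hJ : ∀ a b, A a → E a b → J a b) (hinf : ∀ a b, ∃ a' < a, ∃ b' < b, J a' b')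
    {x : α} {y : β} (hxy : E x y) :
    ∃ a < x, ∃ b < y, J a b ∧ (∀ c, c < x → a < c → ¬ A c) ∧ ∀ c, c < y → b < c → ¬ B c :=
  exists_gt_and_exists_gt_of_correspondence (α := αᵒᵈ) (β := βᵒᵈ) hA hEA hEB
    (fun a b a' b' h h' hb => hlt a' b' a b h' h hb.symm) hJ hinf hxy

end Cells

section Table

variable {R : Type*} [CommRing R] {f : R[X]} {U V : Finset R[X]}

/-- A point at which the signs of the polynomials in `U` may change: a root of a member of `U` whose
image under `i` is not the zero polynomial. -/
def IsBreakpoint {F : Type*} [Field F] (i : R →+* F) (U : Finset R[X]) (x : F) : Prop :=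
  ∃ p ∈ U, p.map i ≠ 0 ∧ p.eval₂ i x = 0

/-- The finite sets of polynomials used to extend a sign table by one more polynomial `f`: the signs
of `U` determine a cell, and `V` adds to `U` the remainders of `f` by the members of `U`, which give
the sign of `f` at the roots of `U`. -/
structure IsSignTable (f : R[X]) (U V : Finset R[X]) : Prop where
  subset : U ⊆ V
  derivative_mem : ∀ p ∈ U, p.derivative ∈ U
  eraseLead_mem : ∀ p ∈ U, p.eraseLead ∈ U
  derivative_self_mem : f.derivative ∈ U
  remainder_mem : ∀ q ∈ U, q ≠ 0 → ∃ (n : ℕ) (g r : R[X]),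
    Polynomial.C (q.leadingCoeff ^ (2 * n)) * f = q * g + r ∧ r ∈ V

theorem finite_isBreakpoint {F : Type*} [Field F] (i : R →+* F) (U : Finset R[X]) :
    {x | IsBreakpoint i U x}.Finite := by
  refine (U.finite_toSet.biUnion fun p _ => (p.map i).rootSet_finite F).subset ?_
  rintro x ⟨p, hp, hp0, hpx⟩
  simp only [Set.mem_iUnion]
  exact ⟨p, hp, by simpa [Polynomial.mem_rootSet, hp0, Polynomial.eval_map] using hpx⟩

theorem IsBreakpoint.exists_leadingCoeff_ne_zero {F : Type*} [Field F] {i : R →+* F} {x : F}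
    (hU : ∀ p ∈ U, p.eraseLead ∈ U) (hx : IsBreakpoint i U x) :
    ∃ p ∈ U, i p.leadingCoeff ≠ 0 ∧ p.eval₂ i x = 0 := by
  obtain ⟨p, hp, hp0, hpx⟩ := hx
  induction hn : p.support.card using Nat.strong_induction_on generalizing p with
  | _ n ih =>
  by_cases hlc : i p.leadingCoeff = 0
  · have hmap : p.eraseLead.map i = p.map i := by
      conv_rhs => rw [← p.eraseLead_add_C_mul_X_pow, Polynomial.map_add, Polynomial.map_mul,
        Polynomial.map_C, hlc, Polynomial.C_0, zero_mul, add_zero]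
    exact ih _ (hn ▸ Polynomial.eraseLead_support_card_lt (by rintro rfl; simp at hp0))
      _ (hU p hp) (hmap ▸ hp0) (by rwa [← Polynomial.eval_map, hmap, Polynomial.eval_map]) rfl
  · exact ⟨p, hp, hlc, hpx⟩

section OneField

variable {F : Type*} [Field F] [LinearOrder F] [IsStrictOrderedRing F] [PolynomialIVT F]
  {i : R →+* F} {x x' : F}

theorem SameSigns.of_forall_not_isBreakpoint (hxx' : x ≤ x')
    (h : ∀ c ∈ Set.Icc x x', ¬ IsBreakpoint i U c) :
    SameSigns (Polynomial.eval₂RingHom i x) (Polynomial.eval₂RingHom i x') U := by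
  intro p hp
  simp only [Polynomial.coe_eval₂RingHom, ← Polynomial.eval_map]
  by_contra hne
  obtain ⟨c, hc, hpc⟩ := PolynomialIVT.exists_eval_eq_zero_of_sign_ne hxx' hne
  refine h c hc ⟨p, hp, fun h0 => hne (by simp [h0]), by rwa [← Polynomial.eval_map]⟩

theorem SameSigns.not_isBreakpoint (hU : ∀ p ∈ U, p.derivative ∈ U)
    (h : SameSigns (Polynomial.eval₂RingHom i x) (Polynomial.eval₂RingHom i x') U)
    (hlt : x < x') : ¬ IsBreakpoint i U x := by
  rintro ⟨p, hp, hp0, hpx⟩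
  refine hp0 (Polynomial.eq_zero_of_infinite_isRoot _
    ((Set.Icc_infinite hlt).mono fun c hc => ?_))
  rw [Set.mem_ofPred_eq, Polynomial.IsRoot, Polynomial.eval_map]
  exact ((h.of_mem_Icc hU hc).eq_zero_iff hp).mpr hpx

end OneField

variable {F G : Type*} [Field F] [LinearOrder F] [IsStrictOrderedRing F] [PolynomialIVT F]
  [Field G] [LinearOrder G] [IsStrictOrderedRing G] [PolynomialIVT G]
  {i : R →+* F} {j : R →+* G} {x x' : F} {y y' : G}

theorem SameSigns.lt_of_lt_of_isBreakpoint (hU : ∀ p ∈ U, p.derivative ∈ U)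
    (h : SameSigns (Polynomial.eval₂RingHom i x) (Polynomial.eval₂RingHom j y) U)
    (h' : SameSigns (Polynomial.eval₂RingHom i x') (Polynomial.eval₂RingHom j y') U)
    (hb : IsBreakpoint i U x ∨ IsBreakpoint i U x') (hlt : x < x') : y < y' := by
  refine h.lt_of_lt hU h' ?_ hlt
  by_contra! hsame
  have hxx' : SameSigns (Polynomial.eval₂RingHom i x) (Polynomial.eval₂RingHom i x') U := hsame
  have hx := hxx'.not_isBreakpoint hU hlt
  refine hb.elim hx fun ⟨p, hp, hp0, hpx'⟩ => hx ⟨p, hp, hp0, (hxx'.eq_zero_iff hp).mpr hpx'⟩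

omit [IsStrictOrderedRing F] [PolynomialIVT F] [IsStrictOrderedRing G] [PolynomialIVT G] in
theorem SameSigns.isBreakpoint_iff (hc : ∀ p ∈ U, SameSigns i j p.coeffs)
    (h : SameSigns (Polynomial.eval₂RingHom i x) (Polynomial.eval₂RingHom j y) U) :
    IsBreakpoint i U x ↔ IsBreakpoint j U y := by
  refine exists_congr fun p => and_congr_right fun hp => and_congr ?_ (h.eq_zero_iff hp)
  exact not_congr (hc p hp).map_eq_zero_iff

namespace IsSignTable

theorem lt_iff_lt (hT : IsSignTable f U V) (hc : ∀ p ∈ U, SameSigns i j p.coeffs)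
    (h : SameSigns (Polynomial.eval₂RingHom i x) (Polynomial.eval₂RingHom j y) V)
    (h' : SameSigns (Polynomial.eval₂RingHom i x') (Polynomial.eval₂RingHom j y') V)
    (hb : IsBreakpoint i U x ∨ IsBreakpoint i U x') : x < x' ↔ y < y' := by
  have hU := h.mono hT.subset
  have hU' := h'.mono hT.subset
  refine ⟨hU.lt_of_lt_of_isBreakpoint hT.derivative_mem hU' hb,
    hU.symm.lt_of_lt_of_isBreakpoint hT.derivative_mem hU'.symm ?_⟩
  rwa [← hU.isBreakpoint_iff hc, ← hU'.isBreakpoint_iff hc]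

omit [PolynomialIVT F] [PolynomialIVT G] in
theorem sign_eval_eq_of_isBreakpoint (hT : IsSignTable f U V)
    (hc : ∀ p ∈ U, SameSigns i j p.coeffs) (hx : IsBreakpoint i U x)
    (h : SameSigns (Polynomial.eval₂RingHom i x) (Polynomial.eval₂RingHom j y) V) :
    SignType.sign (f.eval₂ i x) = SignType.sign (f.eval₂ j y) := by
  obtain ⟨q, hq, hqi, hqx⟩ := hx.exists_leadingCoeff_ne_zero hT.eraseLead_mem
  have hqlc : q.leadingCoeff ≠ 0 := by rintro h0; simp [h0] at hqi
  have hq0 : q ≠ 0 := Polynomial.leadingCoeff_ne_zero.mp hqlc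
  have hqj : j q.leadingCoeff ≠ 0 := ((hc q hq).eq_zero_iff
    (Polynomial.coeff_mem_coeffs hqlc)).not.mp hqi
  have hqy : q.eval₂ j y = 0 := (h.eq_zero_iff (hT.subset hq)).mp hqx
  obtain ⟨n, g, r, hfr, hr⟩ := hT.remainder_mem q hq hq0
  have hrx := congrArg (Polynomial.eval₂RingHom i x) hfr
  have hry := congrArg (Polynomial.eval₂RingHom j y) hfr
  simp only [map_mul, map_add, Polynomial.coe_eval₂RingHom, Polynomial.eval₂_C, hqx, hqy, zero_mul,
    zero_add, map_pow] at hrx hry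
  have := h r hr
  rw [Polynomial.coe_eval₂RingHom, Polynomial.coe_eval₂RingHom, ← hrx, ← hry, sign_mul, sign_mul,
    sign_pos (Even.pow_pos (even_two_mul n) hqi), sign_pos (Even.pow_pos (even_two_mul n) hqj),
    one_mul, one_mul] at this
  exact this

theorem exists_neighbours (hT : IsSignTable f U V) (hcf : SameSigns i j f.coeffs)
    (hcU : ∀ p ∈ U, SameSigns i j p.coeffs)
    (hFG : ∀ x, ∃ y, SameSigns (Polynomial.eval₂RingHom i x) (Polynomial.eval₂RingHom j y) V)
    (hGF : ∀ y, ∃ x, SameSigns (Polynomial.eval₂RingHom i x) (Polynomial.eval₂RingHom j y) V)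
    (h : SameSigns (Polynomial.eval₂RingHom i x) (Polynomial.eval₂RingHom j y) V)
    (hx : ¬ IsBreakpoint i U x) :
    ∃ a b a' b', x ∈ Set.Ioo a a' ∧ y ∈ Set.Ioo b b' ∧
      SignType.sign (f.eval₂ i a) = SignType.sign (f.eval₂ j b) ∧
      SignType.sign (f.eval₂ i a') = SignType.sign (f.eval₂ j b') ∧
      (∀ c ∈ Set.Ioo a a', ¬ IsBreakpoint i U c) ∧ ∀ c ∈ Set.Ioo b b', ¬ IsBreakpoint j U c := by
  have hcf' : ∀ p ∈ ({f} : Finset R[X]), SameSigns i j p.coeffs := by simpa using hcf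
  have hGF' : ∀ y, IsBreakpoint j U y → ∃ x, IsBreakpoint i U x ∧
      SameSigns (Polynomial.eval₂RingHom i x) (Polynomial.eval₂RingHom j y) V := fun y hy => by
    obtain ⟨x, hxy⟩ := hGF y
    exact ⟨x, ((hxy.mono hT.subset).isBreakpoint_iff hcU).mpr hy, hxy⟩
  have hy : ¬ IsBreakpoint j U y := ((h.mono hT.subset).isBreakpoint_iff hcU).not.mp hx
  obtain ⟨a', hxa', b', hyb', hfa', ha', hb'⟩ := exists_gt_and_exists_gt_of_correspondence
    (J := fun a b => SignType.sign (f.eval₂ i a) = SignType.sign (f.eval₂ j b))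
    (finite_isBreakpoint i U) (fun x _ => hFG x) hGF'
    (fun _ _ _ _ h h' => hT.lt_iff_lt hcU h h')
    (fun _ _ hx h => hT.sign_eval_eq_of_isBreakpoint hcU hx h)
    (fun a b => by simpa [SameSigns] using SameSigns.exists_gt hcf' a b) h
  obtain ⟨a, hax, b, hby, hfa, ha, hb⟩ := exists_lt_and_exists_lt_of_correspondence
    (J := fun a b => SignType.sign (f.eval₂ i a) = SignType.sign (f.eval₂ j b))
    (finite_isBreakpoint i U) (fun x _ => hFG x) hGF'
    (fun _ _ _ _ h h' => hT.lt_iff_lt hcU h h')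
    (fun _ _ hx h => hT.sign_eval_eq_of_isBreakpoint hcU hx h)
    (fun a b => by simpa [SameSigns] using SameSigns.exists_lt hcf' a b) h
  refine ⟨a, b, a', b', ⟨hax, hxa'⟩, ⟨hby, hyb'⟩, hfa, hfa', fun c hc hcA => ?_, fun c hc hcB => ?_⟩
  · rcases lt_trichotomy c x with hcx | rfl | hxc
    exacts [ha c hcx hc.1 hcA, hx hcA, ha' c hxc hc.2 hcA]
  · rcases lt_trichotomy c y with hcy | rfl | hyc
    exacts [hb c hcy hc.1 hcB, hy hcB, hb' c hyc hc.2 hcB]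

theorem exists_sign_eval_eq (hc : SameSigns i j f.coeffs) {a a' : F} {b b' : G}
    (hx : x ∈ Set.Ioo a a') (hbb' : b < b')
    (hf : SignType.sign (f.eval₂ i a) = SignType.sign (f.eval₂ j b))
    (hf' : SignType.sign (f.eval₂ i a') = SignType.sign (f.eval₂ j b'))
    (hderiv : f.derivative.map i = 0 ∨ ∀ c ∈ Set.Ioo a a', (f.derivative.map i).eval c ≠ 0) :
    ∃ y ∈ Set.Ioo b b', SignType.sign (f.eval₂ i x) = SignType.sign (f.eval₂ j y) := by
  simp only [← Polynomial.eval_map, ← Polynomial.derivative_map] at *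
  by_cases hfx : (f.map i).eval x = 0
  · rw [hfx, sign_zero]
    by_cases hfi : f.map i = 0
    · obtain ⟨y, hy⟩ := exists_between hbb'
      exact ⟨y, hy, by simp [hc.map_eq_zero_iff.mp hfi]⟩
    · have hne := hderiv.resolve_left fun h0 => hfi <| by
        have hconst := Polynomial.eq_C_of_derivative_eq_zero h0
        rw [hconst, Polynomial.eval_C] at hfx
        rw [hconst, hfx, Polynomial.C_0]
      have hneg := PolynomialIVT.eval_mul_eval_neg_of_eval_eq_zero hx hfx hne
      rw [← sign_eq_neg_one_iff, sign_mul, hf, hf', ← sign_mul, sign_eq_neg_one_iff] at hneg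
      obtain ⟨y, hy, hfy⟩ := PolynomialIVT.exists_eval_eq_zero_of_mul_neg hbb' hneg
      exact ⟨y, hy, by rw [hfy, sign_zero]⟩
  · have hfx' := sign_ne_zero.mpr hfx
    rcases PolynomialIVT.sign_eval_eq_left_or_right hx hfx hderiv with h | h
    · rw [h, hf] at hfx' ⊢
      obtain ⟨y, hy, hfy⟩ :=
        PolynomialIVT.exists_sign_eval_eq_left hbb' (sign_ne_zero.mp hfx')
      exact ⟨y, hy, hfy.symm⟩
    · rw [h, hf'] at hfx' ⊢
      obtain ⟨y, hy, hfy⟩ :=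
        PolynomialIVT.exists_sign_eval_eq_right hbb' (sign_ne_zero.mp hfx')
      exact ⟨y, hy, hfy.symm⟩

/- At a breakpoint the remainders give the sign of `f`. Otherwise `f` is monotone or antitone on
the interval between the neighbouring breakpoints, and its sign can be matched in the corresponding
interval of `G`. -/
theorem exists_sameSigns_insert (hT : IsSignTable f U V)
    (hcf : SameSigns i j f.coeffs) (hcU : ∀ p ∈ U, SameSigns i j p.coeffs)
    (hFG : ∀ x, ∃ y, SameSigns (Polynomial.eval₂RingHom i x) (Polynomial.eval₂RingHom j y) V)
    (hGF : ∀ y, ∃ x, SameSigns (Polynomial.eval₂RingHom i x) (Polynomial.eval₂RingHom j y) V)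
    (x : F) :
    ∃ y, SameSigns (Polynomial.eval₂RingHom i x) (Polynomial.eval₂RingHom j y) U ∧
      SignType.sign (f.eval₂ i x) = SignType.sign (f.eval₂ j y) := by
  obtain ⟨y₀, hxy₀⟩ := hFG x
  by_cases hx : IsBreakpoint i U x
  · exact ⟨y₀, hxy₀.mono hT.subset, hT.sign_eval_eq_of_isBreakpoint hcU hx hxy₀⟩
  obtain ⟨a, b, a', b', hxa, hyb, hfa, hfa', ha, hb⟩ := hT.exists_neighbours hcf hcU hFG hGF hxy₀ hx
  have hderiv : f.derivative.map i = 0 ∨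
      ∀ c ∈ Set.Ioo a a', (f.derivative.map i).eval c ≠ 0 := by
    refine or_iff_not_imp_left.mpr fun h0 c hc h => ha c hc ⟨_, hT.derivative_self_mem, h0, ?_⟩
    rwa [← Polynomial.eval_map]
  obtain ⟨y, hy, hfy⟩ := exists_sign_eval_eq hcf hxa
    (hyb.1.trans hyb.2) hfa hfa' hderiv
  refine ⟨y, (hxy₀.mono hT.subset).trans ?_, hfy⟩
  rcases le_total y₀ y with hle | hle
  · exact .of_forall_not_isBreakpoint hle fun c hc =>
      hb c ⟨hyb.1.trans_le hc.1, hc.2.trans_lt hy.2⟩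
  · exact (SameSigns.of_forall_not_isBreakpoint hle fun c hc =>
      hb c ⟨hy.1.trans_le hc.1, hc.2.trans_lt hyb.2⟩).symm

end IsSignTable

end Table

section Transfer

universe u v

/-- The sign conditions on `S` that hold at some point depend only on the signs of finitely many
coefficient expressions: a form of quantifier elimination that does not mention formulas. -/
def HasSignTransfer {R : Type v} [CommRing R] (S : Finset R[X]) : Prop :=
  ∃ T : Finset R, ∀ (F G : Type u) [Field F] [LinearOrder F] [IsStrictOrderedRing F]
    [PolynomialIVT F] [Field G] [LinearOrder G] [IsStrictOrderedRing G] [PolynomialIVT G]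
    (i : R →+* F) (j : R →+* G), SameSigns i j T → ∀ x : F, ∃ y : G,
      SameSigns (Polynomial.eval₂RingHom i x) (Polynomial.eval₂RingHom j y) S

variable {R : Type v} [CommRing R]

theorem HasSignTransfer.mono {S S' : Finset R[X]} (h : HasSignTransfer.{u} S') (hS : S ⊆ S') :
    HasSignTransfer.{u} S := by
  obtain ⟨T, hT⟩ := h
  refine ⟨T, fun F G _ _ _ _ _ _ _ _ i j hij x => ?_⟩
  obtain ⟨y, hy⟩ := hT F G i j hij x
  exact ⟨y, hy.mono hS⟩

theorem IsSignTable.hasSignTransfer [DecidableEq R[X]] {f : R[X]} {U V : Finset R[X]}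
    (hT : IsSignTable f U V) (hV : HasSignTransfer.{u} V) :
    HasSignTransfer.{u} (insert f U) := by
  classical
  obtain ⟨T, hVT⟩ := hV
  refine ⟨T ∪ f.coeffs ∪ U.biUnion Polynomial.coeffs,
    fun F G _ _ _ _ _ _ _ _ i j hij x => ?_⟩
  have hijT : SameSigns i j T :=
    hij.mono (Finset.subset_union_left.trans Finset.subset_union_left)
  obtain ⟨y, hyU, hyf⟩ := hT.exists_sameSigns_insert
    (hij.mono (Finset.subset_union_right.trans Finset.subset_union_left))
    (fun p hp => hij.mono ((Finset.subset_biUnion_of_mem _ hp).trans Finset.subset_union_right))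
    (hVT F G i j hijT)
    (fun y => (hVT G F j i hijT.symm y).imp fun _ h => h.symm) x
  exact ⟨y, (Finset.forall_mem_insert _ _ _).mpr ⟨hyf, hyU⟩⟩

theorem exists_isSignTable [DecidableEq R[X]] {D : ℕ} {f : R[X]} {L H : Finset R[X]}
    (hL : ∀ p ∈ L, p.degree < D) (hH : ∀ p ∈ insert f H, p.degree < (D + 1 : ℕ)) :
    ∃ L₁ L₂ : Finset R[X], L ⊆ L₁ ∧ (∀ p ∈ L₂, p.degree < D) ∧
      IsSignTable f (L₁ ∪ H) (L₂ ∪ H) := by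
  have hH' : ∀ p ∈ H, p.degree < (D + 1 : ℕ) := fun p hp => hH p (Finset.mem_insert_of_mem hp)
  obtain ⟨L₁, hsub, hdeg, hder, hlead⟩ := exists_finset_derivative_eraseLead_mem D
    (insert f.derivative (L ∪ H.image Polynomial.derivative ∪ H.image Polynomial.eraseLead))
    (by
      simp only [Finset.mem_insert, Finset.mem_union, Finset.mem_image]
      rintro p (rfl | (hp | ⟨q, hq, rfl⟩) | ⟨q, hq, rfl⟩)
      exacts [degree_derivative_lt_of_degree_lt_succ (hH f (Finset.mem_insert_self f H)), hL p hp,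
        degree_derivative_lt_of_degree_lt_succ (hH' q hq),
        degree_eraseLead_lt_of_degree_lt_succ (hH' q hq)])
  simp only [Finset.insert_subset_iff, Finset.union_subset_iff, Finset.image_subset_iff] at hsub
  obtain ⟨hf, ⟨hLL₁, hderH⟩, hleadH⟩ := hsub
  choose! e g r hdiv hr using fun (q : R[X]) (hq : q ≠ 0) => exists_pseudo_remainder f hq
  have hdegU : ∀ q ∈ L₁ ∪ H, q.degree < (D + 1 : ℕ) := fun q hq =>
    (Finset.mem_union.mp hq).elim
      (fun hq => (hdeg q hq).trans (by exact_mod_cast D.lt_succ_self)) (hH' q)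
  have hrdeg : ∀ q ∈ L₁ ∪ H, q ≠ 0 → (r q).degree < D := fun q hq hq0 =>
    (hr q hq0).trans_le (le_of_not_gt fun h =>
      (hdegU q hq).not_ge (by simpa using Nat.WithBot.add_one_le_of_lt h))
  refine ⟨L₁, L₁ ∪ ((L₁ ∪ H).filter (· ≠ 0)).image r, hLL₁, fun p hp => ?_,
    Finset.union_subset_union_left Finset.subset_union_left, ?_, ?_,
    Finset.mem_union_left _ hf, fun q hq hq0 => ⟨e q, g q, r q, hdiv q hq0, ?_⟩⟩
  · rcases Finset.mem_union.mp hp with hp | hp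
    · exact hdeg p hp
    · obtain ⟨q, hq, rfl⟩ := Finset.mem_image.mp hp
      exact hrdeg q (Finset.mem_filter.mp hq).1 (Finset.mem_filter.mp hq).2
  · exact fun p hp => Finset.mem_union_left _ ((Finset.mem_union.mp hp).elim (hder p) (hderH p))
  · exact fun p hp => Finset.mem_union_left _ ((Finset.mem_union.mp hp).elim (hlead p) (hleadH p))
  · exact Finset.mem_union_left _ (Finset.mem_union_right _
      (Finset.mem_image_of_mem r (Finset.mem_filter.mpr ⟨hq, hq0⟩)))

/- The outer induction is on the degree, the inner one on the number of polynomials of top degree;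
derivatives and remainders have smaller degree. -/
theorem hasSignTransfer (S : Finset R[X]) : HasSignTransfer.{u} S := by
  classical
  suffices h : ∀ (D : ℕ) (S : Finset R[X]), (∀ p ∈ S, p.degree < D) → HasSignTransfer.{u} S by
    refine h (S.sup Polynomial.natDegree + 1) S fun p hp =>
      Polynomial.degree_le_natDegree.trans_lt ?_
    exact_mod_cast Nat.lt_succ_of_le (Finset.le_sup (f := Polynomial.natDegree) hp)
  intro D
  induction D with
  | zero =>
    refine fun S hS => ⟨∅, fun F G _ _ _ _ _ _ _ _ i j _ x => ⟨0, fun p hp => ?_⟩⟩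
    simp [Polynomial.degree_eq_bot.mp (Nat.WithBot.lt_zero_iff.mp (hS p hp))]
  | succ D ihD =>
    intro H hH
    suffices h : ∀ L : Finset R[X], (∀ p ∈ L, p.degree < D) → HasSignTransfer.{u} (L ∪ H) by
      simpa using h ∅ (by simp)
    induction H using Finset.induction_on with
    | empty => simpa using ihD
    | insert f H _ ihH =>
      intro L hL
      obtain ⟨L₁, L₂, hLL₁, hL₂, hT⟩ := exists_isSignTable hL hH
      refine (hT.hasSignTransfer
        (ihH (fun p hp => hH p (Finset.mem_insert_of_mem hp)) L₂ hL₂)).mono ?_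
      rw [Finset.union_insert]
      exact Finset.insert_subset_insert _ (Finset.union_subset_union_left hLL₁)

theorem eval₂Hom_finSuccEquiv {F : Type*} [CommRing F] {d : ℕ} (i : R →+* F) (y : F) (a : Fin d → F)
    (p : MvPolynomial (Fin (d + 1)) R) :
    Polynomial.eval₂RingHom (eval₂Hom i a) y (finSuccEquiv R d p) =
      eval₂Hom i (Fin.cons y a : Fin (d + 1) → F) p := by
  suffices h : (Polynomial.eval₂RingHom (eval₂Hom i a) y).comp (finSuccEquiv R d).toRingHom =
      eval₂Hom i (Fin.cons y a : Fin (d + 1) → F) from congr($h p)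
  ext s
  · simp [finSuccEquiv_apply]
  · refine Fin.cases ?_ (fun s => ?_) s <;> simp [finSuccEquiv_X_zero, finSuccEquiv_X_succ]

theorem exists_finset_forall_exists_sameSigns_eval₂ (d : ℕ) (S : Finset (MvPolynomial (Fin d) R)) :
    ∃ T : Finset R, ∀ (F G : Type u) [Field F] [LinearOrder F] [IsStrictOrderedRing F]
      [PolynomialIVT F] [Field G] [LinearOrder G] [IsStrictOrderedRing G] [PolynomialIVT G]
      (i : R →+* F) (j : R →+* G), SameSigns i j T → ∀ b : Fin d → F, ∃ a : Fin d → G,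
        SameSigns (eval₂Hom i b) (eval₂Hom j a) S := by
  classical
  induction d with
  | zero =>
    refine ⟨S.image constantCoeff, fun F G _ _ _ _ _ _ _ _ i j hij b =>
      ⟨finZeroElim, fun p hp => ?_⟩⟩
    obtain ⟨r, rfl⟩ := C_surjective (Fin 0) p
    simpa using hij _ (Finset.mem_image_of_mem _ hp)
  | succ d ih =>
    obtain ⟨T₁, hT₁⟩ := hasSignTransfer.{u} (S.image (finSuccEquiv R d))
    obtain ⟨T, hT⟩ := ih T₁
    refine ⟨T, fun F G _ _ _ _ _ _ _ _ i j hij b => ?_⟩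
    obtain ⟨a, ha⟩ := hT F G i j hij (Fin.tail b)
    obtain ⟨y, hy⟩ := hT₁ F G _ _ ha (b 0)
    refine ⟨Fin.cons y a, fun p hp => ?_⟩
    have hpxy := hy _ (Finset.mem_image_of_mem _ hp)
    rwa [eval₂Hom_finSuccEquiv, eval₂Hom_finSuccEquiv, Fin.cons_self_tail b] at hpxy

theorem PolynomialIVT.isSquare_of_nonneg {k : Type*} [Field k] [LinearOrder k]
    [IsStrictOrderedRing k] [PolynomialIVT k] {c : k} (hc : 0 ≤ c) : IsSquare c := by
  rcases hc.eq_or_lt with rfl | hc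
  · exact IsSquare.zero
  obtain ⟨r, -, hr⟩ := exists_eval_eq_zero (Polynomial.X ^ 2 - Polynomial.C c) 0 (c + 1)
    (by linarith) (by simpa using hc) (by simp; nlinarith)
  exact ⟨r, by simpa [sub_eq_zero, eq_comm, pow_two] using hr⟩

theorem PolynomialIVT.sign_map {k F : Type*} [Field k] [LinearOrder k] [IsStrictOrderedRing k]
    [PolynomialIVT k] [Field F] [LinearOrder F] [IsStrictOrderedRing F] (i : k →+* F) (c : k) :
    SignType.sign (i c) = SignType.sign c := by
  have hpos : ∀ c : k, 0 < c → 0 < i c := fun c hc => by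
    obtain ⟨r, rfl⟩ := isSquare_of_nonneg hc.le
    rw [map_mul]
    exact mul_self_pos.mpr ((map_ne_zero i).mpr (left_ne_zero_of_mul hc.ne'))
  rcases lt_trichotomy c 0 with hc | rfl | hc
  · rw [sign_neg hc, sign_neg (by simpa using hpos (-c) (neg_pos.mpr hc))]
  · simp
  · rw [sign_pos hc, sign_pos (hpos c hc)]

theorem PolynomialIVT.exists_sameSigns_eval {k F : Type u} [Field k] [LinearOrder k]
    [IsStrictOrderedRing k] [PolynomialIVT k] [Field F] [LinearOrder F] [IsStrictOrderedRing F]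
    [PolynomialIVT F] (i : k →+* F) {d : ℕ} (S : Finset (MvPolynomial (Fin d) k)) (b : Fin d → F) :
    ∃ a : Fin d → k, SameSigns (eval₂Hom i b) (eval a) S := by
  obtain ⟨T, hT⟩ := exists_finset_forall_exists_sameSigns_eval₂.{u} d S
  exact hT F k i (RingHom.id k) (fun c _ => by simp [sign_map i]) b

end Transfer

section RealExtension

universe u

theorem isSumSq_map {A B : Type*} [Semiring A] [Semiring B] (f : A →+* B) {x : A}
    (hx : IsSumSq x) : IsSumSq (f x) := by
  induction hx with
  | zero => simp
  | sq_add a _ ih => simpa using ih.sq_add (f a)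

theorem isSemireal_of_ringHom {A B : Type*} [Ring A] [Ring B] [IsSemireal B] (f : A →+* B) :
    IsSemireal A :=
  .of_not_isSumSq_neg_one fun h =>
    IsSemireal.not_isSumSq_neg_one B (by simpa using isSumSq_map f h)

theorem isSumSq_inv {E : Type*} [Field E] {x : E} (hx : IsSumSq x) : IsSumSq x⁻¹ := by
  rcases eq_or_ne x 0 with rfl | hx0
  · simp
  · simpa [hx0] using hx.mul (.mul_self x⁻¹)

theorem eq_zero_of_isSumSq_of_isSumSq_neg {E : Type*} [Field E] [IsSemireal E] {x : E}
    (hx : IsSumSq x) (hx' : IsSumSq (-x)) : x = 0 := by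
  by_contra hx0
  exact IsSemireal.not_isSumSq_neg_one E (by simpa [hx0] using hx'.mul (isSumSq_inv hx))

/-- A semireal field all of whose proper simple algebraic extensions, presented as `AdjoinRoot p`,
fail to be semireal: one of the classical characterisations of real closed fields. -/
class IsMaximalSemireal (E : Type*) [Field E] : Prop extends IsSemireal E where
  isSumSq_neg_one_adjoinRoot (p : E[X]) : Irreducible p → 1 < p.natDegree →
    IsSumSq (-1 : AdjoinRoot p)

section Existence

theorem exists_isSumSq_of_isSumSq_sSup {Ω : Type*} [Field Ω] {c : Set (Subfield Ω)}
    (hne : c.Nonempty) (hc : IsChain (· ≤ ·) c) {x : (sSup c : Subfield Ω)} (hx : IsSumSq x) :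
    ∃ E ∈ c, ∃ y : E, (y : Ω) = x ∧ IsSumSq y := by
  induction hx with
  | zero =>
    obtain ⟨E, hE⟩ := hne
    exact ⟨E, hE, 0, rfl, .zero⟩
  | sq_add a _ ih =>
    obtain ⟨E, hE, y, hy, hys⟩ := ih
    obtain ⟨E', hE', ha⟩ := (Subfield.mem_sSup_of_directedOn hne hc.directedOn).mp a.2
    obtain ⟨M, hM, hEM, hE'M⟩ := hc.directedOn E hE E' hE'
    exact ⟨M, hM, ⟨a, hE'M ha⟩ * ⟨a, hE'M ha⟩ + Subfield.inclusion hEM y, by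
      rw [Subfield.coe_add, Subfield.coe_add, ← hy]; rfl,
      (isSumSq_map _ hys).sq_add _⟩

theorem isSemireal_sSup {Ω : Type*} [Field Ω] {c : Set (Subfield Ω)} (hne : c.Nonempty)
    (hc : IsChain (· ≤ ·) c) (hreal : ∀ E ∈ c, IsSemireal E) : IsSemireal (sSup c : Subfield Ω) :=
  .of_not_isSumSq_neg_one fun h => by
    obtain ⟨E, hE, y, hy, hys⟩ := exists_isSumSq_of_isSumSq_sSup hne hc h
    obtain rfl : y = -1 := Subtype.ext (by simpa using hy)
    have := hreal E hE
    exact IsSemireal.not_isSumSq_neg_one E hys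

theorem isMaximalSemireal_of_maximal {Ω : Type*} [Field Ω] [IsAlgClosed Ω] {E : Subfield Ω}
    (hE : Maximal (fun E : Subfield Ω => IsSemireal E) E) : IsMaximalSemireal E := by
  refine { toIsSemireal := hE.prop, isSumSq_neg_one_adjoinRoot := fun p hp hdeg => ?_ }
  by_contra hcon
  have : Fact (Irreducible p) := ⟨hp⟩
  obtain ⟨t, ht⟩ := IsAlgClosed.exists_eval₂_eq_zero E.subtype p hp.degree_pos.ne'
  let φ : AdjoinRoot p →+* Ω := AdjoinRoot.lift E.subtype t ht
  have hφ : IsSemireal φ.fieldRange :=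
    have : IsSemireal (AdjoinRoot p) := .of_not_isSumSq_neg_one hcon
    isSemireal_of_ringHom φ.rangeRestrictFieldEquiv.symm.toRingHom
  have hle : E ≤ φ.fieldRange := fun x hx => ⟨AdjoinRoot.of p ⟨x, hx⟩, AdjoinRoot.lift_of ht⟩
  have htE : t ∈ E := hE.le_of_ge hφ hle ⟨AdjoinRoot.root p, AdjoinRoot.lift_root ht⟩
  have hroot : p.IsRoot ⟨t, htE⟩ := E.subtype.injective (by
    rw [← Polynomial.eval₂_at_apply, map_zero]
    exact ht)
  exact hdeg.ne' (Polynomial.natDegree_eq_of_degree_eq_some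
    (Polynomial.degree_eq_one_of_irreducible_of_root hp hroot))

theorem exists_isMaximalSemireal (K : Type u) [Field K] [IsSemireal K] :
    ∃ (E : Type u) (_ : Field E) (_ : K →+* E), IsMaximalSemireal E := by
  let ι : K →+* AlgebraicClosure K := algebraMap K (AlgebraicClosure K)
  obtain ⟨E, hKE, hE⟩ := zorn_le_nonempty₀
    {E : Subfield (AlgebraicClosure K) | IsSemireal E}
    (fun c hc hchain E hE => ⟨sSup c, isSemireal_sSup ⟨E, hE⟩ hchain hc, fun _ => le_sSup⟩)
    ι.fieldRange (isSemireal_of_ringHom ι.rangeRestrictFieldEquiv.symm.toRingHom)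
  exact ⟨E, inferInstance, ι.codRestrict E fun x => hKE ⟨x, rfl⟩, isMaximalSemireal_of_maximal hE⟩

end Existence

namespace IsMaximalSemireal

theorem exists_isSumSq_mk_eq {E : Type*} [Field E] {p : E[X]} (hp : p.natDegree ≠ 0)
    {z : AdjoinRoot p} (hz : IsSumSq z) :
    ∃ r : E[X], AdjoinRoot.mk p r = z ∧ r.natDegree ≤ 2 * (p.natDegree - 1) ∧ IsSumSq r ∧
      IsSumSq (r.coeff (2 * (p.natDegree - 1))) := by
  induction hz with
  | zero => exact ⟨0, by simp⟩
  | sq_add b _ ih =>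
    obtain ⟨r, rfl, hdeg, hr, hcoeff⟩ := ih
    obtain ⟨f, rfl⟩ := AdjoinRoot.mk_surjective b
    have hmod : AdjoinRoot.mk p f = AdjoinRoot.mk p (f % p) :=
      AdjoinRoot.mk_eq_mk.mpr ⟨f / p, by linear_combination -(EuclideanDomain.div_add_mod f p)⟩
    have hfp : (f % p).natDegree ≤ p.natDegree - 1 :=
      Nat.le_sub_one_of_lt (Polynomial.natDegree_mod_lt f hp)
    refine ⟨(f % p) * (f % p) + r, by rw [map_add, map_mul, hmod],
      Polynomial.natDegree_add_le_of_degree_le (Polynomial.natDegree_mul_le.trans (by lia)) hdeg,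
      hr.sq_add _, ?_⟩
    rw [Polynomial.coeff_add, two_mul, Polynomial.coeff_mul_add_eq_of_natDegree_le hfp hfp,
      ← two_mul]
    exact hcoeff.sq_add _

variable {E : Type*} [Field E] [IsMaximalSemireal E]

theorem exists_mul_eq_isSumSq_add_one {p : E[X]} (hp : Irreducible p) (hdeg : 1 < p.natDegree) :
    ∃ h r : E[X], p * h = r + 1 ∧ h.natDegree + 2 ≤ p.natDegree ∧ IsSumSq r ∧
      IsSumSq (r.coeff (2 * (p.natDegree - 1))) := by
  obtain ⟨r, hmk, hrdeg, hr, hcoeff⟩ :=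
    exists_isSumSq_mk_eq (by lia) (isSumSq_neg_one_adjoinRoot p hp hdeg)
  obtain ⟨h, hh⟩ : p ∣ r + 1 := by simp [← AdjoinRoot.mk_eq_zero, hmk]
  refine ⟨h, r, hh.symm, ?_, hr, hcoeff⟩
  rcases eq_or_ne h 0 with rfl | hh0
  · simpa [Nat.succ_le_iff] using hdeg
  have hsum : (r + 1).natDegree ≤ 2 * (p.natDegree - 1) :=
    Polynomial.natDegree_add_le_of_degree_le hrdeg (by simp)
  rw [hh, Polynomial.natDegree_mul hp.ne_zero hh0] at hsum
  lia

/- If `a` is not a square, then `-1 = ∑ (xᵢ + yᵢ √a) ^ 2` in `E(√a)`, which gives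
`-a * ∑ yᵢ ^ 2 = 1 + ∑ xᵢ ^ 2`. -/
theorem isSumSq_or_isSumSq_neg (a : E) : IsSumSq a ∨ IsSumSq (-a) := by
  refine or_iff_not_imp_left.mpr fun ha => ?_
  have hp : Irreducible (Polynomial.X ^ 2 - Polynomial.C a) :=
    X_pow_sub_C_irreducible_of_prime Nat.prime_two fun b hb => ha (by
      rw [← hb, pow_two]
      exact .mul_self b)
  have hdeg : (Polynomial.X ^ 2 - Polynomial.C a).natDegree = 2 := Polynomial.natDegree_X_pow_sub_C
  obtain ⟨h, r, hhr, hhdeg, hr, hcoeff⟩ := exists_mul_eq_isSumSq_add_one hp (by lia)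
  obtain ⟨c, rfl⟩ := Polynomial.natDegree_eq_zero.mp (by lia : h.natDegree = 0)
  obtain rfl : r.coeff 2 = c := by
    have := congrArg (Polynomial.coeff · 2) hhr
    simp [Polynomial.coeff_one] at this
    simp [this]
  have h0 : -a * r.coeff 2 = r.eval 0 + 1 := by simpa using congrArg (Polynomial.eval 0) hhr
  rw [hdeg] at hcoeff
  have hr0 : IsSumSq (r.eval 0) := isSumSq_map (Polynomial.evalRingHom 0) hr
  have hc0 : r.coeff 2 ≠ 0 := fun hc => IsSemireal.one_add_ne_zero hr0 (by
    rw [add_comm, ← h0, hc, mul_zero])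
  rw [(eq_mul_inv_iff_mul_eq₀ hc0).mpr h0]
  exact (hr0.add .one).mul (isSumSq_inv hcoeff)

theorem exists_isStrictOrderedRing (E : Type*) [Field E] [IsMaximalSemireal E] :
    ∃ _ : LinearOrder E, IsStrictOrderedRing E := by
  classical
  let C : RingCone E :=
    { Subsemiring.sumSq E with
      eq_zero_of_mem_of_neg_mem' := fun ha hna => eq_zero_of_isSumSq_of_isSumSq_neg
        (Subsemiring.mem_sumSq.mp ha) (Subsemiring.mem_sumSq.mp hna) }
  have : HasMemOrNegMem C := ⟨fun a => (isSumSq_or_isSumSq_neg a).imp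
    Subsemiring.mem_sumSq.mpr Subsemiring.mem_sumSq.mpr⟩
  let _ : LinearOrder E := LinearOrder.mkOfAddGroupCone C
  have : IsOrderedRing E := IsOrderedRing.mkOfCone C
  exact ⟨inferInstance, IsOrderedRing.toIsStrictOrderedRing E⟩

/- A sign change of an irreducible `p` of degree at least two is passed on, by an equation
`p * h = 1 + r` with `r` a sum of squares, to the polynomial `h` of smaller degree; but `h` has no
zeros. -/
theorem eval_mul_eval_nonneg_of_irreducible [LinearOrder E] [IsStrictOrderedRing E] {p : E[X]}
    (hp : Irreducible p) (hdeg : 1 < p.natDegree) {a b : E}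
    (ih : ∀ h : E[X], h.natDegree < p.natDegree → h.eval a * h.eval b < 0 →
      ∃ c ∈ Set.Ioo a b, h.eval c = 0) :
    0 ≤ p.eval a * p.eval b := by
  by_contra! hpab
  obtain ⟨h, r, hhr, hhdeg, hr, -⟩ := exists_mul_eq_isSumSq_add_one hp hdeg
  have hpos (c : E) : 0 < p.eval c * h.eval c := by
    have hrc : 0 ≤ r.eval c := (isSumSq_map (Polynomial.evalRingHom c) hr).nonneg
    rw [← Polynomial.eval_mul, hhr, Polynomial.eval_add, Polynomial.eval_one]
    positivity
  have hsign : h.eval a * h.eval b < 0 :=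
    (neg_iff_neg_of_mul_pos (by linarith [mul_pos (hpos a) (hpos b)])).mp hpab
  obtain ⟨c, -, hc⟩ := ih h (by lia) hsign
  simpa [hc] using hpos c

theorem exists_eval_eq_zero_of_natDegree_le_one {E : Type*} [Field E] [LinearOrder E]
    [IsStrictOrderedRing E] {p : E[X]} (hdeg : p.natDegree ≤ 1) {a b : E} (hab : a < b)
    (hpab : p.eval a * p.eval b < 0) : ∃ c ∈ Set.Ioo a b, p.eval c = 0 := by
  obtain ⟨y, x, rfl⟩ := Polynomial.exists_eq_X_add_C_of_natDegree_le_one hdeg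
  simp only [Polynomial.eval_add, Polynomial.eval_mul, Polynomial.eval_C,
    Polynomial.eval_X] at hpab ⊢
  have hy : y ≠ 0 := by
    rintro rfl
    nlinarith [mul_self_nonneg x]
  obtain ⟨c, rfl⟩ : ∃ c, x = -(y * c) := ⟨-x / y, by field_simp⟩
  have hc : (a - c) * (b - c) < 0 :=
    (pos_iff_neg_of_mul_neg (by linarith : (y * y) * ((a - c) * (b - c)) < 0)).mp
      (mul_self_pos.mpr hy)
  rcases mul_neg_iff.mp hc with ⟨ha, hb⟩ | ⟨ha, hb⟩
  · linarith
  · exact ⟨c, ⟨sub_neg.mp ha, sub_pos.mp hb⟩, by ring⟩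

theorem exists_eq_mul_of_not_irreducible {E : Type*} [Field E] {p : E[X]} (hdeg : 1 < p.natDegree)
    (hp : ¬Irreducible p) :
    ∃ f g : E[X], p = f * g ∧ f.natDegree < p.natDegree ∧ g.natDegree < p.natDegree := by
  have hp0 : p ≠ 0 := Polynomial.ne_zero_of_natDegree_gt hdeg
  have hpu : ¬IsUnit p := Polynomial.not_isUnit_of_natDegree_pos p (zero_lt_one.trans hdeg)
  rw [Polynomial.irreducible_iff_lt_natDegree_lt hp0 hpu] at hp
  push Not at hp
  obtain ⟨f, -, hf, g, rfl⟩ := hp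
  rw [Finset.mem_Ioc] at hf
  rw [Polynomial.natDegree_mul (left_ne_zero_of_mul hp0) (right_ne_zero_of_mul hp0)] at hf ⊢
  exact ⟨f, g, rfl, by lia, by lia⟩

theorem exists_eval_eq_zero_of_mul_neg [LinearOrder E] [IsStrictOrderedRing E] (p : E[X]) {a b : E}
    (hab : a < b) (hpab : p.eval a * p.eval b < 0) : ∃ c ∈ Set.Ioo a b, p.eval c = 0 := by
  induction hn : p.natDegree using Nat.strong_induction_on generalizing p with
  | _ n ih =>
    subst hn
    rcases le_or_gt p.natDegree 1 with hdeg | hdeg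
    · exact exists_eval_eq_zero_of_natDegree_le_one hdeg hab hpab
    by_cases hirr : Irreducible p
    · exact absurd hpab (not_lt.mpr
        (eval_mul_eval_nonneg_of_irreducible hirr hdeg fun h hh hhab => ih _ hh h hhab rfl))
    obtain ⟨f, g, rfl, hf, hg⟩ := exists_eq_mul_of_not_irreducible hdeg hirr
    rw [Polynomial.eval_mul, Polynomial.eval_mul, mul_mul_mul_comm] at hpab
    rcases mul_neg_iff.mp hpab with ⟨-, hgab⟩ | ⟨hfab, -⟩
    · obtain ⟨c, hc, hgc⟩ := ih _ hg g hgab rfl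
      exact ⟨c, hc, by simp [hgc]⟩
    · obtain ⟨c, hc, hfc⟩ := ih _ hf f hfab rfl
      exact ⟨c, hc, by simp [hfc]⟩

theorem polynomialIVT [LinearOrder E] [IsStrictOrderedRing E] : PolynomialIVT E where
  exists_eval_eq_zero p _ _ hab ha hb :=
    exists_eval_eq_zero_of_mul_neg p hab (mul_neg_of_neg_of_pos ha hb)

end IsMaximalSemireal

theorem exists_ringHom_polynomialIVT (K : Type u) [Field K] [IsSemireal K] :
    ∃ (F : Type u) (_ : Field F) (_ : LinearOrder F) (_ : IsStrictOrderedRing F)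
      (_ : PolynomialIVT F), Nonempty (K →+* F) := by
  obtain ⟨E, _, ι, _⟩ := exists_isMaximalSemireal K
  obtain ⟨_, _⟩ := IsMaximalSemireal.exists_isStrictOrderedRing E
  exact ⟨E, inferInstance, inferInstance, inferInstance, IsMaximalSemireal.polynomialIVT, ⟨ι⟩⟩

end RealExtension

section RealNullstellensatz

theorem exists_isSumSq_mul_sq_eq {D K : Type*} [CommRing D] [IsDomain D] [Field K] [Algebra D K]
    [IsFractionRing D K] {z : K} (hz : IsSumSq z) :
    ∃ γ δ : D, IsSumSq γ ∧ δ ≠ 0 ∧ z * algebraMap D K δ ^ 2 = algebraMap D K γ := by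
  induction hz with
  | zero => exact ⟨0, 1, .zero, one_ne_zero, by simp⟩
  | sq_add x _ ih =>
    obtain ⟨γ, δ, hγ, hδ, hz⟩ := ih
    obtain ⟨u, v, hv, rfl⟩ := IsFractionRing.div_surjective (A := D) x
    have hv0 : algebraMap D K v ≠ 0 := IsFractionRing.to_map_ne_zero_of_mem_nonZeroDivisors hv
    refine ⟨(u * δ) * (u * δ) + γ * (v * v), v * δ, (hγ.mul (.mul_self v)).sq_add _,
      mul_ne_zero (nonZeroDivisors.ne_zero hv) hδ, ?_⟩
    simp only [map_add, map_mul, ← hz]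
    field_simp

theorem isSemireal_of_isFractionRing (D : Type*) {K : Type*} [CommRing D] [IsDomain D]
    [IsFormallyReal D] [Field K] [Algebra D K] [IsFractionRing D K] : IsSemireal K :=
  .of_not_isSumSq_neg_one fun h => by
    obtain ⟨γ, δ, hγ, hδ, hz⟩ := exists_isSumSq_mul_sq_eq (D := D) h
    have hsum : δ * δ + γ = 0 := IsFractionRing.injective D K (by
      rw [map_add, map_mul, ← hz]
      simp [pow_two])
    exact hδ (mul_self_eq_zero.mp
      (IsFormallyReal.eq_zero_of_add_right (.mul_self δ) hγ hsum))

universe u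

/- The residue field of `p` embeds in an extension of `k` with the intermediate value property.
There the coordinate functions are a zero of `p` at which `s` does not vanish, and transfer brings
such a point down to `k`. -/
theorem exists_le_ker_eval_of_isFormallyReal_quotient {k : Type u} [Field k] [LinearOrder k]
    [IsStrictOrderedRing k] [PolynomialIVT k] {d : ℕ} (p : Ideal (MvPolynomial (Fin d) k))
    [p.IsPrime] [IsFormallyReal (MvPolynomial (Fin d) k ⧸ p)] {s : MvPolynomial (Fin d) k}
    (hs : s ∉ p) : ∃ a : Fin d → k, p ≤ RingHom.ker (eval a) ∧ eval a s ≠ 0 := by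
  classical
  let K := FractionRing (MvPolynomial (Fin d) k ⧸ p)
  have : IsSemireal K := isSemireal_of_isFractionRing (MvPolynomial (Fin d) k ⧸ p)
  obtain ⟨F, _, _, _, _, ⟨ι⟩⟩ := exists_ringHom_polynomialIVT K
  let θ : MvPolynomial (Fin d) k →+* F :=
    (ι.comp (algebraMap _ K)).comp (Ideal.Quotient.mk p)
  have hθ (f : MvPolynomial (Fin d) k) : θ f = 0 ↔ f ∈ p := by
    simp [θ, Ideal.Quotient.eq_zero_iff_mem]
  have heval : eval₂Hom (θ.comp C) (fun m => θ (X m)) = θ := by ext <;> simp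
  obtain ⟨T, hT⟩ := (isNoetherianRing_iff_ideal_fg _).mp inferInstance p
  obtain ⟨a, ha⟩ := PolynomialIVT.exists_sameSigns_eval (θ.comp C) (insert s T) (fun m => θ (X m))
  rw [heval] at ha
  refine ⟨a, hT ▸ Ideal.span_le.mpr fun f hf => ?_, fun hsa => hs ?_⟩
  · refine (ha.eq_zero_iff (Finset.mem_insert_of_mem hf)).mp ((hθ f).mpr ?_)
    exact hT ▸ Ideal.subset_span hf
  · exact (hθ s).mp ((ha.eq_zero_iff (Finset.mem_insert_self s T)).mpr hsa)

end RealNullstellensatz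

section ExistsFunctional

theorem exists_isPrime_colon_singleton_smul {A M : Type*} [CommRing A] [IsNoetherianRing A]
    [AddCommGroup M] [Module A M] {N : Submodule A M} {x : M} (hx : x ∉ N) :
    ∃ c : A, (N.colon {c • x}).IsPrime := by
  have hx' : N.mkQ x ≠ 0 := by simpa using hx
  have : Nontrivial (Submodule.span A {N.mkQ x}) := Submodule.nontrivial_span_singleton hx'
  obtain ⟨p, hp⟩ := associatedPrimes.nonempty A (Submodule.span A {N.mkQ x})
  obtain ⟨hprime, ⟨y, hy⟩, rfl⟩ := isAssociatedPrime_iff.mp hp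
  obtain ⟨c, rfl⟩ := Submodule.mem_span_singleton.mp hy
  refine ⟨c, ?_⟩
  convert hprime using 1
  ext r
  rw [Submodule.mem_colon_singleton, Submodule.mem_colon_singleton, Submodule.mem_bot,
    Subtype.ext_iff]
  simp only [← N.ker_mkQ, LinearMap.mem_ker, map_smul, SetLike.val_smul, ZeroMemClass.coe_zero]

theorem exists_smul_eq_algebraMap_comp {D K N : Type*} [CommRing D] [IsDomain D] [Field K]
    [Algebra D K] [IsFractionRing D K] [AddCommGroup N] [Module D N] [Module.Finite D N]
    (h : N →ₗ[D] K) :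
    ∃ r : D, r ≠ 0 ∧ ∃ f : Module.Dual D N, ∀ x, algebraMap D K (f x) = r • h x := by
  obtain ⟨r, hr, hint⟩ := FractionalIdeal.isFractional_of_fg (S := nonZeroDivisors D)
    (Module.Finite.iff_fg.mp (inferInstance : Module.Finite D h.range))
  let ι := LinearEquiv.ofInjective (Algebra.linearMap D K) (IsFractionRing.injective D K)
  let g := (r • h).codRestrict (Algebra.linearMap D K).range
    fun x => hint (h x) (LinearMap.mem_range_self h x)
  exact ⟨r, nonZeroDivisors.ne_zero hr, ι.symm ∘ₗ g,
    fun x => congrArg Subtype.val (ι.apply_symm_apply (g x))⟩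

theorem exists_dual_ne_zero_of_forall_smul_ne_zero {D N : Type*} [CommRing D] [IsDomain D]
    [AddCommGroup N] [Module D N] [Module.Finite D N] {x : N} (hx : ∀ r : D, r ≠ 0 → r • x ≠ 0) :
    ∃ f : Module.Dual D N, f x ≠ 0 := by
  let K := FractionRing D
  let L := LocalizedModule.mkLinearMap (nonZeroDivisors D) N
  let _ : Module K (LocalizedModule (nonZeroDivisors D) N) :=
    inferInstanceAs (Module (Localization (nonZeroDivisors D)) _)
  have hLx : L x ≠ 0 := fun h0 => by
    obtain ⟨r, hr⟩ := (IsLocalizedModule.eq_zero_iff (nonZeroDivisors D) L).mp h0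
    exact hx r (nonZeroDivisors.ne_zero r.2) hr
  obtain ⟨g, hg⟩ := Module.Projective.exists_dual_ne_zero K hLx
  obtain ⟨r, hr, f, hf⟩ := exists_smul_eq_algebraMap_comp (g.restrictScalars D ∘ₗ L)
  refine ⟨f, fun h0 => hg ?_⟩
  have := hf x
  rw [h0, map_zero, eq_comm, smul_eq_zero_iff_right hr] at this
  exact this

end ExistsFunctional

section RealLeftIdeal

/-- A left ideal `I` of a ring with involution is *real* if `∑ star (b i) * b i ∈ I` forces every
`b i` into `I`. -/
def IsRealLeftIdeal {B : Type*} [Ring B] [StarRing B] (I : Ideal B) : Prop :=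
  ∀ (k : ℕ) (b : Fin k → B), ∑ i, star (b i) * b i ∈ I → ∀ i, b i ∈ I

theorem exists_fin_sum_mul_self_eq {R : Type*} [Semiring R] {x : R} (hx : IsSumSq x) :
    ∃ (k : ℕ) (g : Fin k → R), ∑ i, g i * g i = x := by
  induction hx with
  | zero => exact ⟨0, Fin.elim0, by simp⟩
  | sq_add a _ ih =>
    obtain ⟨k, g, rfl⟩ := ih
    exact ⟨k + 1, Fin.cons a g, by simp [Fin.sum_univ_succ]⟩

namespace IsRealLeftIdeal

variable {B : Type*} [Ring B] [StarRing B] {I : Ideal B}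

theorem mem_of_star_mul_self_mem (hI : IsRealLeftIdeal I) {b : B} (hb : star b * b ∈ I) : b ∈ I :=
  hI 1 (fun _ => b) (by simpa using hb) 0

theorem comap {B' : Type*} [Ring B'] [StarRing B'] (hI : IsRealLeftIdeal I) (f : B' →+* B)
    (hf : ∀ b, f (star b) = star (f b)) : IsRealLeftIdeal (I.comap f) := fun k b hb =>
  hI k (fun i => f (b i)) (by simpa [Ideal.mem_comap, hf] using hb)

variable {A : Type*} [CommRing A] [StarRing A] [TrivialStar A] [Algebra A B] [StarModule A B]

theorem isFormallyReal_quotient_colon (hI : IsRealLeftIdeal I) (b : B) :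
    IsFormallyReal (A ⧸ (I.restrictScalars A).colon {b}) := by
  refine .of_eq_zero_of_eq_zero_of_mul_self_add fun {s a} hs hsum => ?_
  obtain ⟨k, g', rfl⟩ := exists_fin_sum_mul_self_eq hs
  choose g hg using fun i => Ideal.Quotient.mk_surjective (g' i)
  obtain ⟨a, rfl⟩ := Ideal.Quotient.mk_surjective a
  simp only [← hg] at hsum
  let h : Fin (k + 1) → A := Fin.cons a g
  have hmem : ∑ i, h i * h i ∈ (I.restrictScalars A).colon {b} :=
    Ideal.Quotient.eq_zero_iff_mem.mp (by simpa [h, Fin.sum_univ_succ] using hsum)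
  have hstar : ∑ i, star (h i • b) * (h i • b) = star b * ((∑ i, h i * h i) • b) := by
    simp only [star_smul, star_trivial, Finset.sum_smul, Finset.mul_sum, smul_mul_assoc,
      mul_smul_comm, mul_smul]
  rw [Ideal.Quotient.eq_zero_iff_mem, Submodule.mem_colon_singleton]
  exact hI _ (fun i => h i • b) (hstar ▸ I.mul_mem_left _ (Submodule.mem_colon_singleton.mp hmem)) 0

theorem mem_of_mem_smul_top (hI : IsRealLeftIdeal I) {p : Ideal A} {b : B}
    (hb : b ∈ (p • ⊤ : Submodule A B)) (hpb : ∀ c ∈ p, c • b ∈ I) : b ∈ I := by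
  suffices ∀ x ∈ (p • ⊤ : Submodule A B), star x * b ∈ I from
    hI.mem_of_star_mul_self_mem (this b hb)
  intro x hx
  refine Submodule.smul_induction_on hx (fun c hc y _ => ?_) fun x y hx hy => ?_
  · rw [star_smul, star_trivial, smul_mul_assoc, ← mul_smul_comm]
    exact I.mul_mem_left _ (hpb c hc)
  · rw [star_add, add_mul]
    exact I.add_mem hx hy

/- Let the prime `p` be the annihilator of some `c • b` modulo `I`. Because `I` is real, `c • b` is
not a torsion element of `B ⧸ (I + p B)` over the domain `A ⧸ p`. -/
theorem exists_linearMap_quotient [IsNoetherianRing A] [Module.Finite A B]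
    (hI : IsRealLeftIdeal I) {b : B} (hb : b ∉ I) :
    ∃ p : Ideal A, p.IsPrime ∧ IsFormallyReal (A ⧸ p) ∧
      ∃ φ : B →ₗ[A] A ⧸ p, (∀ t ∈ I, φ t = 0) ∧ φ b ≠ 0 := by
  let J : Submodule A B := I.restrictScalars A
  obtain ⟨c, hp⟩ := exists_isPrime_colon_singleton_smul (N := J) (A := A) hb
  let p := J.colon {c • b}
  refine ⟨p, hp, hI.isFormallyReal_quotient_colon _, ?_⟩
  let π : B →ₗ[A] (B ⧸ J) ⧸ (p • ⊤ : Submodule A (B ⧸ J)) := Submodule.mkQ _ ∘ₗ J.mkQ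
  have hker : ∀ x, π x = 0 → ∃ y ∈ (p • ⊤ : Submodule A B), x - y ∈ J := fun x hx => by
    have : J.mkQ x ∈ (p • ⊤ : Submodule A B).map J.mkQ := by
      rwa [Submodule.map_smul'', Submodule.map_top, Submodule.range_mkQ,
        ← Submodule.Quotient.mk_eq_zero]
    obtain ⟨y, hy, hxy⟩ := this
    exact ⟨y, hy, (Submodule.Quotient.eq J).mp hxy.symm⟩
  have htorsion : ∀ r : A ⧸ p, r ≠ 0 → r • π (c • b) ≠ 0 := fun r hr h0 => by
    obtain ⟨r, rfl⟩ := Ideal.Quotient.mk_surjective r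
    obtain ⟨y, hy, hxy⟩ := hker (r • c • b) (by rw [map_smul]; exact h0)
    have hyJ : y ∈ J := hI.mem_of_mem_smul_top hy fun s hs => by
      have h1 := J.smul_mem r (Submodule.mem_colon_singleton.mp hs)
      have h2 := J.sub_mem h1 (J.smul_mem s hxy)
      rwa [smul_sub, smul_comm s r, sub_sub_cancel] at h2
    refine hr (Ideal.Quotient.eq_zero_iff_mem.mpr (Submodule.mem_colon_singleton.mpr ?_))
    exact sub_add_cancel (r • c • b) y ▸ J.add_mem hxy hyJ
  have : Module.Finite (A ⧸ p) ((B ⧸ J) ⧸ (p • ⊤ : Submodule A (B ⧸ J))) :=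
    .of_restrictScalars_finite A _ _
  obtain ⟨f, hf⟩ := exists_dual_ne_zero_of_forall_smul_ne_zero htorsion
  refine ⟨f.restrictScalars A ∘ₗ π, fun t ht => ?_, fun h0 => hf ?_⟩
  · have : π t = 0 := by simp [π, (Submodule.Quotient.mk_eq_zero J).mpr ht]
    simp [this]
  · rw [map_smul]
    have := congrArg (c • ·) h0
    simpa using this

end IsRealLeftIdeal

end RealLeftIdeal

section QuaternionMatrix

open scoped Quaternion

variable {ι A K : Type*} [Fintype ι] [DecidableEq ι] [CommRing A] [CommRing K]

/-- The map between quaternion rings induced componentwise by a homomorphism of their coefficient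
rings. -/
def quaternionMapFun (f : A →+* K) (q : ℍ[A]) : ℍ[K] :=
  ⟨f q.re, f q.imI, f q.imJ, f q.imK⟩

@[simp]
theorem re_quaternionMapFun (f : A →+* K) (q : ℍ[A]) : (quaternionMapFun f q).re = f q.re := rfl

@[simp]
theorem imI_quaternionMapFun (f : A →+* K) (q : ℍ[A]) : (quaternionMapFun f q).imI = f q.imI := rfl

@[simp]
theorem imJ_quaternionMapFun (f : A →+* K) (q : ℍ[A]) : (quaternionMapFun f q).imJ = f q.imJ := rfl

@[simp]
theorem imK_quaternionMapFun (f : A →+* K) (q : ℍ[A]) : (quaternionMapFun f q).imK = f q.imK := rfl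

/-- `quaternionMapFun` as a ring homomorphism. -/
def quaternionMap (f : A →+* K) : ℍ[A] →+* ℍ[K] where
  toFun := quaternionMapFun f
  map_zero' := by ext <;> simp
  map_one' := by ext <;> simp
  map_add' p q := by ext <;> simp
  map_mul' p q := by ext <;> simp

theorem quaternionMap_star (f : A →+* K) (q : ℍ[A]) :
    quaternionMap f (star q) = star (quaternionMap f q) := by
  ext <;> simp [quaternionMap]

theorem quaternionMap_surjective {f : A →+* K} (hf : Function.Surjective f) :
    Function.Surjective (quaternionMap f) := fun q => by
  choose g hg using hf
  exact ⟨⟨g q.re, g q.imI, g q.imJ, g q.imK⟩, by ext <;> exact hg _⟩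

theorem mem_ker_smul_top_of_quaternionMap_eq_zero {f : A →+* K} {q : ℍ[A]}
    (hq : quaternionMap f q = 0) : q ∈ (RingHom.ker f • ⊤ : Submodule A ℍ[A]) := by
  let b := QuaternionAlgebra.basisOneIJK (R := A) (-1) 0 (-1)
  rw [← b.sum_repr q]
  refine sum_mem fun i _ => Submodule.smul_mem_smul ?_ Submodule.mem_top
  fin_cases i
  exacts [congrArg (·.re) hq, congrArg (·.imI) hq, congrArg (·.imJ) hq, congrArg (·.imK) hq]

theorem mem_ker_smul_top_of_mapMatrix_quaternionMap_eq_zero {f : A →+* K} {M : Matrix ι ι ℍ[A]}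
    (hM : (quaternionMap f).mapMatrix M = 0) :
    M ∈ (RingHom.ker f • ⊤ : Submodule A (Matrix ι ι ℍ[A])) := by
  rw [matrix_eq_sum_single M]
  refine sum_mem fun i _ => sum_mem fun j _ => ?_
  have hmem := Submodule.mem_map_of_mem (f := singleLinearMap A i j)
    (mem_ker_smul_top_of_quaternionMap_eq_zero (congrFun₂ hM i j))
  rw [Submodule.map_smul''] at hmem
  exact Submodule.smul_mono le_rfl le_top hmem

theorem mapMatrix_quaternionMap_star (f : A →+* K) (M : Matrix ι ι ℍ[A]) :
    (quaternionMap f).mapMatrix (star M) = star ((quaternionMap f).mapMatrix M) := by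
  ext1 i j
  exact quaternionMap_star f (M j i)

/- The functional `φ`, reduced along `A ⧸ p → K`, vanishes on the kernel of `F` and so descends to
the image of `F`. -/
theorem mapMatrix_notMem_map {f : A →+* K} (hf : Function.Surjective f) {p : Ideal A}
    (hp : ∀ c ∈ p, f c = 0) {φ : Matrix ι ι ℍ[A] →ₗ[A] A ⧸ p} {I : Ideal (Matrix ι ι ℍ[A])}
    (hI : ∀ T ∈ I, φ T = 0) {Q : Matrix ι ι ℍ[A]} (hQ : Ideal.Quotient.lift p f hp (φ Q) ≠ 0) :
    (quaternionMap f).mapMatrix Q ∉ I.map (quaternionMap f).mapMatrix := fun hmem => by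
  have hker : ∀ D ∈ (RingHom.ker f • ⊤ : Submodule A (Matrix ι ι ℍ[A])),
      Ideal.Quotient.lift p f hp (φ D) = 0 := fun D hD => by
    refine Submodule.smul_induction_on hD (fun c hc y _ => ?_) fun x y hx hy => ?_
    · rw [map_smul, Algebra.smul_def, map_mul, Ideal.Quotient.algebraMap_eq,
        Ideal.Quotient.lift_mk, RingHom.mem_ker.mp hc, zero_mul]
    · rw [map_add, map_add, hx, hy, add_zero]
  have hsurj : Function.Surjective (quaternionMap f).mapMatrix := fun M : Matrix ι ι ℍ[K] => by
    choose g hg using quaternionMap_surjective hf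
    exact ⟨M.map g, ext fun i j => hg (M i j)⟩
  obtain ⟨T, hT, hTQ⟩ := (Ideal.mem_map_iff_of_surjective _ hsurj).mp hmem
  have hQT := hker (Q - T) (mem_ker_smul_top_of_mapMatrix_quaternionMap_eq_zero (by
    rw [map_sub, hTQ, sub_self]))
  rw [map_sub, hI T hT, sub_zero] at hQT
  exact hQ hQT

end QuaternionMatrix

section LeftAnnihilator

open scoped Quaternion

variable {ι : Type*} [Fintype ι] [DecidableEq ι]

/-- The left ideal of the square matrices that annihilate the vector `v`. -/
def leftAnnihilator {R : Type*} [Ring R] (v : ι → R) : Ideal (Matrix ι ι R) where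
  carrier := {M | M *ᵥ v = 0}
  add_mem' {M N} hM hN := by
    simp only [Set.mem_ofPred_eq] at *
    rw [add_mulVec, hM, hN, add_zero]
  zero_mem' := zero_mulVec v
  smul_mem' M N hN := by
    simp only [Set.mem_ofPred_eq, smul_eq_mul] at *
    rw [← mulVec_mulVec, hN, mulVec_zero]

theorem mem_leftAnnihilator {R : Type*} [Ring R] {v : ι → R} {M : Matrix ι ι R} :
    M ∈ leftAnnihilator v ↔ M *ᵥ v = 0 :=
  Iff.rfl

/- The column of `1 - e` witnesses the claim, where `e` is an idempotent generating `J`. -/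
theorem exists_le_leftAnnihilator_of_notMem {D : Type*} [DivisionRing D]
    {J : Ideal (Matrix ι ι D)} {X : Matrix ι ι D} (hX : X ∉ J) :
    ∃ v, J ≤ leftAnnihilator v ∧ X ∉ leftAnnihilator v := by
  obtain ⟨e, he, rfl⟩ := IsSemisimpleRing.ideal_eq_span_idempotent J
  have hXe : X * (1 - e) ≠ 0 := fun h0 => by
    rw [mul_sub, mul_one, sub_eq_zero] at h0
    exact hX (Ideal.mem_span_singleton'.mpr ⟨X, h0.symm⟩)
  obtain ⟨j, hj⟩ : ∃ j, X *ᵥ (1 - e).col j ≠ 0 := by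
    by_contra! h
    exact hXe (ext fun i j => congrFun (h j) i)
  refine ⟨(1 - e).col j, ?_, hj⟩
  rw [Ideal.span_le, Set.singleton_subset_iff, SetLike.mem_coe, mem_leftAnnihilator]
  exact funext fun i => congrFun₂ he.mul_one_sub_self i j

theorem eq_zero_of_sum_star_mul_self_eq_zero {k κ : Type*} [Field k] [LinearOrder k]
    [IsStrictOrderedRing k] [Fintype κ] {q : κ → ℍ[k]} (hq : ∑ x, star (q x) * q x = 0) (x : κ) :
    q x = 0 := by
  have hsum : ∑ x, Quaternion.normSq (q x) = 0 :=
    Quaternion.algebraMap_injective (by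
      simpa only [map_sum, map_zero, Quaternion.algebraMap_def, Quaternion.star_mul_self] using hq)
  exact Quaternion.normSq_eq_zero.mp
    ((Finset.sum_eq_zero_iff_of_nonneg fun _ _ => Quaternion.normSq_nonneg).mp hsum x
      (Finset.mem_univ x))

theorem isRealLeftIdeal_leftAnnihilator {k : Type*} [Field k] [LinearOrder k]
    [IsStrictOrderedRing k] (v : ι → ℍ[k]) : IsRealLeftIdeal (leftAnnihilator v) := by
  intro r M hM i
  have hsum : ∑ x : Fin r × ι, star ((M x.1 *ᵥ v) x.2) * (M x.1 *ᵥ v) x.2 = 0 := by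
    calc
      _ = ∑ i, star v ⬝ᵥ (star (M i) * M i) *ᵥ v := by
        rw [Fintype.sum_prod_type]
        refine Finset.sum_congr rfl fun i _ => ?_
        rw [← mulVec_mulVec, dotProduct_mulVec, star_eq_conjTranspose, ← star_mulVec]
        rfl
      _ = star v ⬝ᵥ (∑ i, star (M i) * M i) *ᵥ v := by rw [sum_mulVec, dotProduct_sum]
      _ = 0 := by rw [mem_leftAnnihilator.mp hM, dotProduct_zero]
  exact funext fun j => eq_zero_of_sum_star_mul_self_eq_zero hsum (i, j)

end LeftAnnihilator

section Nullstellensatz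

open scoped Quaternion

theorem matricial_quaternionic_nullstellensatz_central_general {k : Type*} [Field k]
    [LinearOrder k] [IsStrictOrderedRing k] [PolynomialIVT k] {d : ℕ} {ι κ : Type*} [Fintype ι]
    [DecidableEq ι] (P : κ → Matrix ι ι ℍ[MvPolynomial (Fin d) k])
    (Q : Matrix ι ι ℍ[MvPolynomial (Fin d) k]) :
    (∀ (a : Fin d → k) (v : ι → ℍ[k]),
        (∀ i, (quaternionMap (eval a)).mapMatrix (P i) *ᵥ v = 0) →
          (quaternionMap (eval a)).mapMatrix Q *ᵥ v = 0) ↔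
      ∀ I : Ideal (Matrix ι ι ℍ[MvPolynomial (Fin d) k]),
        IsRealLeftIdeal I → (∀ i, P i ∈ I) → Q ∈ I := by
  constructor
  · intro h I hI hP
    by_contra hQ
    let _ : StarRing (MvPolynomial (Fin d) k) := starRingOfComm
    have : TrivialStar (MvPolynomial (Fin d) k) := ⟨fun _ => rfl⟩
    have : StarModule (MvPolynomial (Fin d) k) ℍ[MvPolynomial (Fin d) k] :=
      ⟨Quaternion.star_smul⟩
    obtain ⟨p, hp, hreal, φ, hφI, hφQ⟩ :=
      hI.exists_linearMap_quotient (A := MvPolynomial (Fin d) k) hQ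
    obtain ⟨s, hs⟩ := Ideal.Quotient.mk_surjective (φ Q)
    obtain ⟨a, hpa, hsa⟩ := exists_le_ker_eval_of_isFormallyReal_quotient p (s := s) fun hsp =>
      hφQ (hs ▸ Ideal.Quotient.eq_zero_iff_mem.mpr hsp)
    have hQa := mapMatrix_notMem_map (fun c => ⟨C c, eval_C c⟩)
      (fun c hc => RingHom.mem_ker.mp (hpa hc)) hφI (by rw [← hs]; exact hsa)
    obtain ⟨v, hIv, hQv⟩ := exists_le_leftAnnihilator_of_notMem hQa
    exact hQv (h a v fun i => hIv (Ideal.mem_map_of_mem _ (hP i)))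
  · intro h a v
    exact h ((leftAnnihilator v).comap (quaternionMap (eval a)).mapMatrix)
      ((isRealLeftIdeal_leftAnnihilator v).comap _ (mapMatrix_quaternionMap_star _))

end Nullstellensatz

/-- **First Matricial Quaternionic Nullstellensatz (Theorem E).** -/
theorem matricial_quaternionic_nullstellensatz_central (d n m : ℕ)
    (P : Fin m → Matrix (Fin n) (Fin n) (Quaternion (MvPolynomial (Fin d) ℝ)))
    (Q : Matrix (Fin n) (Fin n) (Quaternion (MvPolynomial (Fin d) ℝ))) :
    (∀ (a : Fin d → ℝ) (v : Fin n → Quaternion ℝ),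
        (∀ i, (evalMatQ a (P i)).mulVec v = 0) → (evalMatQ a Q).mulVec v = 0) ↔
      (∀ I : Ideal (Matrix (Fin n) (Fin n) (Quaternion (MvPolynomial (Fin d) ℝ))),
        I.IsRealLeftIdealH → (∀ i, P i ∈ I) → Q ∈ I) :=
  matricial_quaternionic_nullstellensatz_central_general P Q
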